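/- arXiv:2511.21418 — 2 statements merged into one kernel-verified Lean document; each statement's English description precedes it below -/
import Mathlib

section
/- There is an absolute constant C > 0 such that for every integer n ≥ 2, every ε ∈ (0, 1/2), and every positive semidefinite Hankel matrix H ∈ ℝ^{n×n}, there exists a Hankel matrix Ĥ ∈ ℝ^{n×n} of rank at most C·(ln n)·ln(1/ε) satisfying both ‖H − Ĥ‖₂ ≤ ε‖H‖₂ and ‖H − Ĥ‖_F ≤ ε‖H‖_F. -/
open scoped BigOperators

/-- A matrix is Hankel if its entries depend only on the sum of the indices. -/
def IsHankel {n : ℕ} (A : Matrix (Fin n) (Fin n) ℝ) : Prop :=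
  ∀ i j k l : Fin n, (i : ℕ) + (j : ℕ) = (k : ℕ) + (l : ℕ) → A i j = A k l

/-- Euclidean (ℓ₂) norm of a vector. -/
noncomputable def euclNorm {n : ℕ} (x : Fin n → ℝ) : ℝ := Real.sqrt (∑ i, x i ^ 2)

/-- Spectral norm of a matrix: supremum of ‖Ax‖₂ over the Euclidean unit ball. -/
noncomputable def specNorm {n : ℕ} (A : Matrix (Fin n) (Fin n) ℝ) : ℝ :=
  ⨆ x : {x : Fin n → ℝ // euclNorm x ≤ 1}, euclNorm (A.mulVec x.1)

/-- Frobenius norm of a matrix. -/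
noncomputable def froNorm {n : ℕ} (A : Matrix (Fin n) (Fin n) ℝ) : ℝ :=
  Real.sqrt (∑ i, ∑ j, (A i j) ^ 2)


lemma exp_rem (p : ℕ) (y : ℝ) (hy : 0 ≤ y) :
    |Real.exp y - ∑ l ∈ Finset.range p, y ^ l / (l.factorial : ℝ)|
      ≤ (2/3)^p * Real.exp (3/2 * y) := by
  have h1 := Real.sum_le_exp_of_nonneg hy p
  rw [abs_of_nonneg (by linarith)]
  have hs : ∀ z : ℝ, HasSum (fun l : ℕ => z ^ l / (l.factorial : ℝ)) (Real.exp z) := fun z => by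
    rw [Real.exp_eq_exp_ℝ]
    exact NormedSpace.expSeries_div_hasSum_exp z
  have h2 := (hs y).summable.sum_add_tsum_nat_add p
  rw [(hs y).tsum_eq] at h2
  have h3 := (hs (3/2*y)).summable.sum_add_tsum_nat_add p
  rw [(hs (3/2*y)).tsum_eq] at h3
  have h4 : 0 ≤ ∑ i ∈ Finset.range p, (3/2*y) ^ i / (i.factorial : ℝ) :=
    Finset.sum_nonneg fun i _ => by positivity
  have h5 : ∑' i : ℕ, y ^ (i+p) / ((i+p).factorial : ℝ)
      ≤ ∑' i : ℕ, (2/3)^p * ((3/2*y) ^ (i+p) / ((i+p).factorial : ℝ)) := by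
    refine Summable.tsum_le_tsum (fun i => ?_) ((summable_nat_add_iff p).2 (hs y).summable)
      (((summable_nat_add_iff p).2 (hs (3/2*y)).summable).mul_left _)
    have : (2/3:ℝ)^p * ((3/2*y) ^ (i+p) / ((i+p).factorial : ℝ))
        = (3/2)^i * (y ^ (i+p) / ((i+p).factorial : ℝ)) := by
      rw [mul_pow, pow_add (3/2:ℝ)]
      have : (2/3:ℝ)^p * (3/2)^p = 1 := by rw [← mul_pow]; norm_num
      linear_combination ((3/2)^i * (y ^ (i+p) / ((i+p).factorial : ℝ))) * this
    rw [this]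
    exact le_mul_of_one_le_left (by positivity) (one_le_pow₀ (by norm_num))
  rw [tsum_mul_left] at h5
  have h6 : (2/3:ℝ)^p * (∑' i : ℕ, ((3/2*y) ^ (i+p) / ((i+p).factorial : ℝ)))
      ≤ (2/3:ℝ)^p * Real.exp (3/2*y) := by
    gcongr; linarith
  linarith

noncomputable def Aseq (n K p : ℕ) (c : ℕ → ℕ → ℝ) (d : ℕ → ℝ) (m : ℕ) : ℝ :=
  (∑ q ∈ Finset.range (K+1), Real.exp (-((2:ℝ)^q/(2*n))) ^ m * ∑ l ∈ Finset.range p, c q l * (m:ℝ)^l)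
    + if m < p then d m else 0

lemma key_approx (n K p : ℕ) (hn : 1 ≤ n) (hK : 2 * n ≤ 2 ^ K) (x : ℝ) (hx0 : 0 ≤ x) (hx1 : x ≤ 1) :
    ∃ c d, ∀ i j : ℕ, i < n → j < n →
      |x ^ (i+j) - Aseq n K p c d (i+j)| ≤ 2 * (2/3)^p * x ^ (i/4 + j/4) := by
  have hn' : (0:ℝ) < n := by exact_mod_cast hn
  by_cases hxs : x ≤ Real.exp (-1)
  · refine ⟨fun _ _ => 0, fun m => x ^ m, fun i j _ _ => ?_⟩
    simp only [Aseq, zero_mul, Finset.sum_const_zero, mul_zero, zero_add]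
    split_ifs with h
    · simp; positivity
    · rw [sub_zero, abs_of_nonneg (by positivity)]
      have e : i + j = (i/4+j/4) + ((i+j) - (i/4+j/4)) := by omega
      set r := (i+j) - (i/4+j/4) with hr
      have hr4 : 3 * p ≤ 4 * r := by omega
      rw [e, pow_add, mul_comm]
      gcongr
      have h1 : x ^ r ≤ Real.exp (-1) ^ r := by gcongr
      have h2 : Real.exp (-1) ^ r ≤ Real.exp (-(3/4)) ^ p := by
        rw [← Real.exp_nat_mul, ← Real.exp_nat_mul]
        apply Real.exp_le_exp.2
        have : (3:ℝ) * p ≤ 4 * r := by exact_mod_cast hr4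
        linarith
      have h3 : Real.exp (-(3/4)) ≤ 2/3 := by
        rw [Real.exp_neg]
        have := Real.add_one_le_exp (3/4:ℝ)
        rw [inv_le_comm₀ (by positivity) (by norm_num)]
        linarith
      have h4 : Real.exp (-(3/4)) ^ p ≤ (2/3:ℝ)^p := by gcongr
      have : 0 < (2/3:ℝ)^p := by positivity
      linarith
  · push Not at hxs
    have hxp : 0 < x := lt_trans (Real.exp_pos _) hxs
    obtain ⟨t, rfl⟩ : ∃ t, x = Real.exp (-t) := ⟨-Real.log x, by simp [Real.exp_log hxp]⟩
    have ht1 : t < 1 := by have := Real.exp_lt_exp.1 hxs; linarith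
    have ht0 : 0 ≤ t := by
      have := Real.exp_le_one_iff.1 hx1; linarith
    have hex : ∃ q : ℕ, t ≤ (2:ℝ)^q/(2*n) := ⟨K, by
      rw [le_div_iff₀ (by positivity)]
      have : (2:ℝ) * n ≤ 2 ^ K := by exact_mod_cast hK
      nlinarith⟩
    classical
    obtain ⟨q, hqK, hq, hq'⟩ : ∃ q ≤ K, t ≤ (2:ℝ)^q/(2*n) ∧ (q = 0 ∨ (2:ℝ)^q/(2*n) ≤ 2 * t) := by
      refine ⟨Nat.find hex, Nat.find_min' hex ?_, Nat.find_spec hex, ?_⟩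
      · rw [le_div_iff₀ (by positivity)]
        have : (2:ℝ) * n ≤ 2 ^ K := by exact_mod_cast hK
        nlinarith
      · rcases Nat.eq_zero_or_pos (Nat.find hex) with h | h
        · exact Or.inl h
        · right
          have := Nat.find_min hex (Nat.sub_lt h one_pos)
          push Not at this
          have e : (2:ℝ)^(Nat.find hex) = 2 ^ (Nat.find hex - 1) * 2 := by
            rw [← pow_succ]; congr 1; omega
          rw [e, mul_div_right_comm]; linarith
    set b : ℝ := (2:ℝ)^q/(2*n) with hb
    refine ⟨fun q' l => if q' = q then (b - t)^l / (l.factorial:ℝ) else 0, fun _ => 0, fun i j hi hj => ?_⟩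
    have hA : Aseq n K p (fun q' l => if q' = q then (b - t)^l / (l.factorial:ℝ) else 0) (fun _ => 0) (i+j)
        = Real.exp (-b) ^ (i+j) * ∑ l ∈ Finset.range p, ((b-t) * ((i+j:ℕ):ℝ))^l / (l.factorial:ℝ) := by
      simp only [Aseq, ite_self, add_zero]
      rw [Finset.sum_eq_single q]
      · simp only [if_true]
        congr 1
        apply Finset.sum_congr rfl
        intro l _
        rw [mul_pow]; ring
      · intro q' _ hne; simp [hne]
      · intro h; exact absurd (Finset.mem_range.2 (by omega)) h
    rw [hA]
    set m := i + j with hm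
    have hy : 0 ≤ (b-t) * (m:ℝ) := mul_nonneg (by linarith) (by positivity)
    have e1 : Real.exp (-t) ^ m = Real.exp (-b)^m * Real.exp ((b-t)*(m:ℝ)) := by
      rw [← Real.exp_nat_mul, ← Real.exp_nat_mul, ← Real.exp_add]; congr 1; ring
    rw [e1, ← mul_sub, abs_mul, abs_of_nonneg (by positivity)]
    have h1 := exp_rem p _ hy
    calc _ ≤ Real.exp (-b)^m * ((2/3)^p * Real.exp (3/2 * ((b-t) * (m:ℝ)))) := by gcongr
      _ = (2/3)^p * Real.exp (m * (-b) + 3/2 * ((b-t) * (m:ℝ))) := by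
        rw [Real.exp_add, ← Real.exp_nat_mul]; ring
      _ ≤ (2/3)^p * (Real.exp (1/2) * Real.exp (-t) ^ (i/4+j/4)) := by
        rw [← Real.exp_nat_mul, ← Real.exp_add]
        refine mul_le_mul_of_nonneg_left (Real.exp_le_exp.2 ?_) (by positivity)
        have hm4 : (4:ℝ) * ((i/4+j/4 : ℕ):ℝ) ≤ m := by
          have : 4 * (i/4+j/4) ≤ m := by omega
          exact_mod_cast this
        have hm0 : (0:ℝ) ≤ m := by positivity
        have hmt : (((i/4+j/4 : ℕ):ℝ)) * t ≤ m / 4 * t := by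
          apply mul_le_mul_of_nonneg_right _ ht0; linarith
        rcases hq' with h0 | h2
        · have hbm : b * m ≤ 1 := by
            rw [hb, h0, pow_zero]
            rw [div_mul_eq_mul_div, div_le_one (by positivity)]
            have : m ≤ 2 * n := by omega
            have : (m:ℝ) ≤ 2 * n := by exact_mod_cast this
            linarith
          nlinarith [mul_nonneg hm0 ht0]
        · nlinarith [mul_nonneg hm0 ht0, mul_le_mul_of_nonneg_right h2 hm0]
      _ ≤ (2/3)^p * (2 * Real.exp (-t) ^ (i/4+j/4)) := by
        gcongr
        have h := Real.add_one_le_exp (-(1/2):ℝ)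
        rw [Real.exp_neg, le_inv_comm₀ (by norm_num) (by positivity)] at h
        norm_num at h ⊢
        linarith
      _ = _ := by ring

lemma rank_add_le' {n : ℕ} (A B : Matrix (Fin n) (Fin n) ℝ) : (A + B).rank ≤ A.rank + B.rank := by
  unfold Matrix.rank
  rw [Matrix.mulVecLin_add]
  refine (Submodule.finrank_mono ?_).trans (Submodule.finrank_add_le_finrank_add_finrank _ _)
  rintro _ ⟨v, rfl⟩
  exact Submodule.add_mem_sup (LinearMap.mem_range_self _ v) (LinearMap.mem_range_self _ v)

lemma rank_sum_le' {n : ℕ} {ι : Type*} (s : Finset ι) (A : ι → Matrix (Fin n) (Fin n) ℝ) (p : ℕ)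
    (h : ∀ q ∈ s, (A q).rank ≤ p) : (∑ q ∈ s, A q).rank ≤ s.card * p := by
  classical
  induction s using Finset.induction_on with
  | empty => simp
  | insert a s ha ih =>
    rw [Finset.sum_insert ha, Finset.card_insert_of_notMem ha, add_mul, one_mul, add_comm]
    refine (rank_add_le' _ _).trans ?_
    have h1 := h a (Finset.mem_insert_self _ _)
    have h2 := ih fun q hq => h q (Finset.mem_insert_of_mem hq)
    omega

lemma rank_of_factor {n p : ℕ} (M : Matrix (Fin n) (Fin n) ℝ) (a b : ℕ → Fin n → ℝ)
    (h : ∀ i j, M i j = ∑ s ∈ Finset.range p, a s i * b s j) : M.rank ≤ p := by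
  have : M = (Matrix.of fun (i : Fin n) (s : Fin p) => a s i) *
      (Matrix.of fun (s : Fin p) (j : Fin n) => b s j) := by
    ext i j
    rw [h, Matrix.mul_apply, Finset.sum_range]
    rfl
  rw [this]
  exact (Matrix.rank_mul_le_left _ _).trans (Matrix.rank_le_width _)

lemma rank_polyexp {n p : ℕ} (z : ℝ) (c : ℕ → ℝ) :
    (Matrix.of fun i j : Fin n => z ^ ((i:ℕ)+(j:ℕ)) *
      ∑ l ∈ Finset.range p, c l * (((i:ℕ)+(j:ℕ) : ℕ):ℝ)^l).rank ≤ p := by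
  refine rank_of_factor _ (fun s i => z ^ (i:ℕ) * ((i:ℕ):ℝ)^s)
    (fun s j => z ^ (j:ℕ) * ∑ l ∈ Finset.range p,
      if s ≤ l then c l * (((j:ℕ):ℝ)^(l-s) * (l.choose s : ℝ)) else 0) fun i j => ?_
  simp only [Matrix.of_apply, Finset.mul_sum]
  rw [Finset.sum_comm]
  apply Finset.sum_congr rfl
  intro l hl
  have hl := Finset.mem_range.1 hl
  push_cast
  rw [add_pow, Finset.mul_sum, Finset.mul_sum]
  rw [← Finset.sum_subset (Finset.range_subset_range.2 (Nat.succ_le_of_lt hl))]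
  · apply Finset.sum_congr rfl
    intro s hs
    have : s ≤ l := Nat.lt_succ_iff.1 (Finset.mem_range.1 hs)
    rw [if_pos this, pow_add]; ring
  · intro s _ hs
    have : ¬ s ≤ l := fun h => hs (Finset.mem_range.2 (Nat.lt_succ_of_le h))
    simp [this]

lemma rank_trunc {n p : ℕ} (d : ℕ → ℝ) :
    (Matrix.of fun i j : Fin n => if (i:ℕ)+(j:ℕ) < p then d ((i:ℕ)+(j:ℕ)) else 0).rank ≤ p := by
  refine rank_of_factor _ (fun s i => if s = i then 1 else 0)
    (fun s j => if s + (j:ℕ) < p then d (s+(j:ℕ)) else 0) fun i j => ?_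
  simp only [Matrix.of_apply, ite_mul, one_mul, zero_mul]
  rw [Finset.sum_ite_eq']
  split_ifs with h1 h2 h2
  · rfl
  · exact absurd (Finset.mem_range.2 (by omega)) h2
  · rfl
  · rfl

lemma rank_Aseq (n K p : ℕ) (c d) :
    (Matrix.of fun i j : Fin n => Aseq n K p c d ((i:ℕ)+(j:ℕ))).rank ≤ (K+2)*p := by
  have : (Matrix.of fun i j : Fin n => Aseq n K p c d ((i:ℕ)+(j:ℕ))) =
      (∑ q ∈ Finset.range (K+1), Matrix.of fun i j : Fin n =>
        Real.exp (-((2:ℝ)^q/(2*n))) ^ ((i:ℕ)+(j:ℕ)) *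
        ∑ l ∈ Finset.range p, c q l * (((i:ℕ)+(j:ℕ) : ℕ):ℝ)^l) +
      Matrix.of fun i j : Fin n => if (i:ℕ)+(j:ℕ) < p then d ((i:ℕ)+(j:ℕ)) else 0 := by
    ext i j
    simp [Aseq, Matrix.sum_apply]
  rw [this]
  refine (rank_add_le' _ _).trans ?_
  have h1 := rank_sum_le' (n := n) (Finset.range (K+1)) _ p fun q _ =>
    rank_polyexp (n := n) (p := p) (Real.exp (-((2:ℝ)^q/(2*n)))) (c q)
  have h2 := rank_trunc (n := n) (p := p) d
  rw [Finset.card_range] at h1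
  calc _ ≤ (K+1)*p + p := add_le_add h1 h2
    _ = _ := by ring

lemma class_approx {ι : Type*} (S : Finset ι) (n K p : ℕ) (hn : 1 ≤ n) (hK : 2 * n ≤ 2 ^ K)
    (w x : ι → ℝ) (hw : ∀ k ∈ S, 0 ≤ w k) (hx0 : ∀ k ∈ S, 0 ≤ x k) (hx1 : ∀ k ∈ S, x k ≤ 1) :
    ∃ g : ℕ → ℝ, (Matrix.of fun i j : Fin n => g ((i:ℕ)+(j:ℕ))).rank ≤ (K+2)*p ∧
      ∀ i j : ℕ, i < n → j < n → |∑ k ∈ S, w k * x k ^ (i+j) - g (i+j)|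
        ≤ 2 * (2/3)^p * ∑ k ∈ S, w k * (x k ^ (i/4) * x k ^ (j/4)) := by
  have H : ∀ k, ∃ c d, k ∈ S → ∀ i j : ℕ, i < n → j < n →
      |x k ^ (i+j) - Aseq n K p c d (i+j)| ≤ 2 * (2/3)^p * x k ^ (i/4 + j/4) := by
    intro k
    by_cases hk : k ∈ S
    · obtain ⟨c, d, h⟩ := key_approx n K p hn hK (x k) (hx0 k hk) (hx1 k hk)
      exact ⟨c, d, fun _ => h⟩
    · exact ⟨fun _ _ => 0, fun _ => 0, fun h => absurd h hk⟩
  choose c d hcd using H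
  refine ⟨Aseq n K p (fun q l => ∑ k ∈ S, w k * c k q l) (fun m => ∑ k ∈ S, w k * d k m),
    rank_Aseq _ _ _ _ _, fun i j hi hj => ?_⟩
  have e : ∀ m, Aseq n K p (fun q l => ∑ k ∈ S, w k * c k q l) (fun m => ∑ k ∈ S, w k * d k m) m
      = ∑ k ∈ S, w k * Aseq n K p (c k) (d k) m := by
    intro m
    simp only [Aseq, mul_add, Finset.sum_add_distrib]
    congr 1
    · simp only [Finset.mul_sum, Finset.sum_mul]
      rw [Finset.sum_comm' (s := S) (t' := Finset.range (K+1)) (s' := fun _ => S) (by simp)]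
      apply Finset.sum_congr rfl; intro q _
      rw [Finset.sum_comm]
      apply Finset.sum_congr rfl; intro k _
      apply Finset.sum_congr rfl; intro l _
      ring
    · split_ifs <;> simp
  rw [e, ← Finset.sum_sub_distrib, Finset.mul_sum]
  refine (Finset.abs_sum_le_sum_abs _ _).trans (Finset.sum_le_sum fun k hk => ?_)
  rw [← mul_sub, abs_mul, abs_of_nonneg (hw k hk), ← pow_add]
  calc _ ≤ w k * (2 * (2/3)^p * x k ^ (i/4 + j/4)) :=
        mul_le_mul_of_nonneg_left (hcd k hk i j hi hj) (hw k hk)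
    _ = _ := by ring

open scoped MatrixOrder in
lemma hankel_rep {n : ℕ} (hn : 0 < n) (H : Matrix (Fin n) (Fin n) ℝ) (hH : H.PosDef) (hHk : IsHankel H) :
    ∃ w x : Fin n → ℝ, (∀ k, 0 ≤ w k) ∧ ∀ i j : Fin n, H i j = ∑ k, w k * x k ^ ((i:ℕ)+(j:ℕ)) := by
  obtain ⟨B, hB⟩ := CStarAlgebra.nonneg_iff_eq_star_mul_self.mp hH.posSemidef.nonneg
  have hBt : H = B.transpose * B := by
    rw [hB, Matrix.star_eq_conjTranspose, Matrix.conjTranspose_eq_transpose_of_trivial]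
  have hBu : IsUnit B.det := by
    have h1 := hH.isUnit
    rw [Matrix.isUnit_iff_isUnit_det, hBt, Matrix.det_mul] at h1
    exact isUnit_of_mul_isUnit_right h1
  obtain ⟨R, hR1, hR2⟩ : ∃ R, B * R = 1 ∧ R * B = 1 :=
    ⟨B⁻¹, Matrix.mul_nonsing_inv _ hBu, Matrix.nonsing_inv_mul _ hBu⟩
  let H' : Matrix (Fin n) (Fin n) ℝ := Matrix.of fun i j =>
    if h : (i:ℕ) + 1 < n then H ⟨i+1, h⟩ j else if h : (j:ℕ) + 1 < n then H i ⟨j+1, h⟩ else 0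
  have hH' : H'.transpose = H' := by
    ext i j
    simp only [H', Matrix.transpose_apply, Matrix.of_apply]
    split_ifs with h1 h2 h2
    · exact hHk _ _ _ _ (by simp; omega)
    · exact hHk _ _ _ _ (by simp; omega)
    · exact hHk _ _ _ _ (by simp; omega)
    · rfl
  let K := R.transpose * H' * R
  have hK : K.IsHermitian := by
    show K.conjTranspose = K
    rw [Matrix.conjTranspose_eq_transpose_of_trivial]
    simp only [K, Matrix.transpose_mul, Matrix.transpose_transpose, hH', Matrix.mul_assoc]
  have hsp := hK.spectral_theorem
  rw [Unitary.conjStarAlgAut_apply] at hsp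
  set U : Matrix (Fin n) (Fin n) ℝ := (hK.eigenvectorUnitary : Matrix (Fin n) (Fin n) ℝ) with hU
  have hU1 : star U * U = 1 := Unitary.coe_star_mul_self hK.eigenvectorUnitary
  have hU2 : U * star U = 1 := Unitary.coe_mul_star_self hK.eigenvectorUnitary
  set lam := hK.eigenvalues with hlam
  have hUK : star U * K = Matrix.diagonal lam * star U := by
    rw [hsp, ← Matrix.mul_assoc, ← Matrix.mul_assoc]
    have : star U * U = 1 := hU1
    simp only [this, Matrix.one_mul]
    rfl
  let Y := star U * B
  have hYY : Y.transpose * Y = H := by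
    have : Y.transpose = B.transpose * U := by
      simp only [Y, Matrix.transpose_mul]
      rw [Matrix.star_eq_conjTranspose, Matrix.conjTranspose_eq_transpose_of_trivial,
        Matrix.transpose_transpose]
    rw [this, Matrix.mul_assoc, ← Matrix.mul_assoc U, hU2, Matrix.one_mul, hBt]
  have hDY : Matrix.diagonal lam * Y = star U * R.transpose * H' := by
    simp only [Y]
    rw [← Matrix.mul_assoc, ← hUK]
    simp only [K, Matrix.mul_assoc, hR2, Matrix.mul_one]
  have hRH : star U * R.transpose * H = Y := by
    have : R.transpose * B.transpose = 1 := by rw [← Matrix.transpose_mul, hR1, Matrix.transpose_one]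
    rw [hBt, Matrix.mul_assoc, ← Matrix.mul_assoc R.transpose, this, Matrix.one_mul]
  have hstep : ∀ k (i : ℕ) (h : i + 1 < n), Y k ⟨i+1, h⟩ = lam k * Y k ⟨i, by omega⟩ := by
    intro k i h
    rw [← Matrix.diagonal_mul, hDY, ← hRH, Matrix.mul_apply, Matrix.mul_apply]
    apply Finset.sum_congr rfl
    intro a _
    congr 1
    rw [← hH']
    simp only [H', Matrix.transpose_apply, Matrix.of_apply]
    rw [dif_pos h]
    exact hHk _ _ _ _ (by simp; omega)
  have hpow : ∀ k (i : ℕ) (h : i < n), Y k ⟨i, h⟩ = lam k ^ i * Y k ⟨0, hn⟩ := by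
    intro k i
    induction i with
    | zero => intro h; simp
    | succ i ih => intro h; rw [hstep, ih, pow_succ]; ring
  refine ⟨fun k => Y k ⟨0, hn⟩ ^ 2, lam, fun k => sq_nonneg _, fun i j => ?_⟩
  rw [← hYY, Matrix.mul_apply]
  apply Finset.sum_congr rfl
  intro k _
  rw [Matrix.transpose_apply, hpow k i i.2, hpow k j j.2, pow_add]
  ring

lemma exists_posDef_hankel (n : ℕ) : ∃ P : Matrix (Fin n) (Fin n) ℝ, P.PosDef ∧ IsHankel P := by
  let V := Matrix.vandermonde (fun i : Fin n => ((i:ℕ):ℝ))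
  have hV : V.det ≠ 0 := by
    rw [Matrix.det_vandermonde_ne_zero_iff]
    intro a b h
    simp only at h
    exact Fin.ext (by exact_mod_cast h)
  refine ⟨V.conjTranspose * V, Matrix.PosDef.conjTranspose_mul_self V
    (Matrix.mulVec_injective_of_isUnit ((Matrix.isUnit_iff_isUnit_det _).2 hV.isUnit)), ?_⟩
  intro i j k l h
  simp only [Matrix.mul_apply, V, Matrix.conjTranspose_apply, Matrix.vandermonde_apply, star_trivial,
    ← pow_add, h]

lemma euclNorm_eq {n : ℕ} (x : Fin n → ℝ) : euclNorm x = ‖(WithLp.toLp 2 x : EuclideanSpace ℝ (Fin n))‖ := by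
  simp [euclNorm, EuclideanSpace.norm_eq]

lemma froNorm_eq {n : ℕ} (A : Matrix (Fin n) (Fin n) ℝ) : froNorm A =
    ‖(WithLp.toLp 2 (fun p : Fin n × Fin n => A p.1 p.2) : EuclideanSpace ℝ (Fin n × Fin n))‖ := by
  simp [froNorm, EuclideanSpace.norm_eq, Fintype.sum_prod_type]

lemma specNorm_eq {n : ℕ} (A : Matrix (Fin n) (Fin n) ℝ) :
    specNorm A = ‖Matrix.toEuclideanCLM (n := Fin n) (𝕜 := ℝ) A‖ := by
  have key : ∀ x : {x : Fin n → ℝ // euclNorm x ≤ 1}, euclNorm (A.mulVec x.1) ≤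
      ‖Matrix.toEuclideanCLM (n := Fin n) (𝕜 := ℝ) A‖ := by
    intro x
    have h := (Matrix.toEuclideanCLM (n := Fin n) (𝕜 := ℝ) A).le_opNorm (WithLp.toLp 2 x.1)
    rw [Matrix.toEuclideanCLM_toLp, ← euclNorm_eq, ← euclNorm_eq] at h
    exact h.trans (mul_le_of_le_one_right (norm_nonneg _) x.2)
  have : Nonempty {x : Fin n → ℝ // euclNorm x ≤ 1} := ⟨⟨0, by simp [euclNorm]⟩⟩
  apply le_antisymm
  · exact ciSup_le key
  · apply ContinuousLinearMap.opNorm_le_of_unit_norm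
    · exact Real.iSup_nonneg fun x => Real.sqrt_nonneg _
    · intro x hx
      have h := le_ciSup (f := fun x : {x : Fin n → ℝ // euclNorm x ≤ 1} => euclNorm (A.mulVec x.1))
        ⟨_, by rintro _ ⟨y, rfl⟩; exact key y⟩ ⟨WithLp.ofLp x, by rw [euclNorm_eq]; exact hx.le⟩
      simp only [euclNorm_eq] at h
      rw [← Matrix.toEuclideanCLM_toLp] at h
      simp only [specNorm, euclNorm_eq]
      exact h

lemma specNorm_nonneg {n : ℕ} (A : Matrix (Fin n) (Fin n) ℝ) : 0 ≤ specNorm A := by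
  rw [specNorm_eq]; exact norm_nonneg _

lemma froNorm_nonneg {n : ℕ} (A : Matrix (Fin n) (Fin n) ℝ) : 0 ≤ froNorm A := by
  rw [froNorm_eq]; exact norm_nonneg _

lemma specNorm_add {n : ℕ} (A B : Matrix (Fin n) (Fin n) ℝ) :
    specNorm (A + B) ≤ specNorm A + specNorm B := by
  simp only [specNorm_eq, map_add]; exact norm_add_le _ _

lemma froNorm_add {n : ℕ} (A B : Matrix (Fin n) (Fin n) ℝ) :
    froNorm (A + B) ≤ froNorm A + froNorm B := by
  simp only [froNorm_eq]
  exact norm_add_le (WithLp.toLp 2 (fun p : Fin n × Fin n => A p.1 p.2) : EuclideanSpace ℝ (Fin n × Fin n))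
    (WithLp.toLp 2 (fun p : Fin n × Fin n => B p.1 p.2))

lemma specNorm_smul {n : ℕ} (c : ℝ) (A : Matrix (Fin n) (Fin n) ℝ) :
    specNorm (c • A) = |c| * specNorm A := by
  simp only [specNorm_eq, map_smul, norm_smul, Real.norm_eq_abs]

lemma froNorm_smul {n : ℕ} (c : ℝ) (A : Matrix (Fin n) (Fin n) ℝ) :
    froNorm (c • A) = |c| * froNorm A := by
  simp only [froNorm_eq]
  rw [← Real.norm_eq_abs, ← norm_smul]; rfl

lemma specNorm_pos {n : ℕ} (A : Matrix (Fin n) (Fin n) ℝ) (h : A ≠ 0) : 0 < specNorm A := by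
  rw [specNorm_eq, norm_pos_iff]; simpa using h

lemma froNorm_pos {n : ℕ} (A : Matrix (Fin n) (Fin n) ℝ) (h : A ≠ 0) : 0 < froNorm A := by
  rw [froNorm_eq, norm_pos_iff]
  intro h0
  apply h
  ext i j
  exact congrFun (congrArg WithLp.ofLp h0) (i, j)

lemma quad_le {n : ℕ} (A : Matrix (Fin n) (Fin n) ℝ) (x : Fin n → ℝ) :
    ∑ i, ∑ j, x i * A i j * x j ≤ specNorm A * ∑ i, x i ^ 2 := by
  have h1 : ∑ i, ∑ j, x i * A i j * x j =
      inner ℝ (WithLp.toLp 2 x : EuclideanSpace ℝ (Fin n))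
        (Matrix.toEuclideanCLM (n := Fin n) (𝕜 := ℝ) A (WithLp.toLp 2 x)) := by
    rw [Matrix.toEuclideanCLM_toLp]
    simp only [PiLp.inner_apply, Matrix.mulVec, dotProduct, RCLike.inner_apply, conj_trivial,
      Finset.sum_mul]
    exact Finset.sum_congr rfl fun i _ => Finset.sum_congr rfl fun j _ => by ring
  have h2 : ∑ i, x i ^ 2 = ‖(WithLp.toLp 2 x : EuclideanSpace ℝ (Fin n))‖ ^ 2 := by
    rw [← euclNorm_eq, euclNorm, Real.sq_sqrt (Finset.sum_nonneg fun i _ => sq_nonneg _)]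
  rw [h1, h2, specNorm_eq]
  refine (real_inner_le_norm _ _).trans ?_
  have := (Matrix.toEuclideanCLM (n := Fin n) (𝕜 := ℝ) A).le_opNorm (WithLp.toLp 2 x)
  have h3 := mul_le_mul_of_nonneg_left this (norm_nonneg (WithLp.toLp 2 x : EuclideanSpace ℝ (Fin n)))
  refine h3.trans (le_of_eq (by ring))

lemma specNorm_le_of_bilin {n : ℕ} (E : Matrix (Fin n) (Fin n) ℝ) (c : ℝ) (hc : 0 ≤ c)
    (h : ∀ x y : Fin n → ℝ, ∑ i, ∑ j, x i * E i j * y j ≤ c / 2 * (∑ i, x i ^ 2 + ∑ i, y i ^ 2)) :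
    specNorm E ≤ c := by
  have : Nonempty {x : Fin n → ℝ // euclNorm x ≤ 1} := ⟨⟨0, by simp [euclNorm]⟩⟩
  refine ciSup_le fun y => ?_
  set z := E.mulVec y.1 with hz
  have hy : ∑ i, y.1 i ^ 2 ≤ 1 := by
    have := y.2
    rwa [euclNorm, Real.sqrt_le_one] at this
  have hzsq : ∑ i, z i ^ 2 = euclNorm z ^ 2 := by
    rw [euclNorm, Real.sq_sqrt (Finset.sum_nonneg fun i _ => sq_nonneg _)]
  have hz0 : 0 ≤ euclNorm z := Real.sqrt_nonneg _
  rcases hz0.eq_or_lt with h0 | hpos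
  · rw [← h0]; exact hc
  have h1 := h (fun i => z i / euclNorm z) y.1
  have e1 : ∑ i, ∑ j, z i / euclNorm z * E i j * y.1 j = euclNorm z := by
    have : ∀ i, ∑ j, z i / euclNorm z * E i j * y.1 j = z i ^ 2 / euclNorm z := by
      intro i
      have : z i = ∑ j, E i j * y.1 j := rfl
      have e3 : ∑ j, z i / euclNorm z * E i j * y.1 j = z i / euclNorm z * ∑ j, E i j * y.1 j := by
        rw [Finset.mul_sum]
        exact Finset.sum_congr rfl fun j _ => by ring
      rw [e3, ← this]; ring
    simp only [this]
    rw [← Finset.sum_div, hzsq]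
    field_simp
  have e2 : ∑ i, (z i / euclNorm z) ^ 2 = 1 := by
    simp only [div_pow]
    rw [← Finset.sum_div, hzsq]
    field_simp
  rw [e1, e2] at h1
  nlinarith

lemma sum_comp_le {n : ℕ} (f : Fin n → Fin n) (hf : ∀ a, (Finset.univ.filter fun i => f i = a).card ≤ 4)
    (φ : Fin n → ℝ) (hφ : ∀ a, 0 ≤ φ a) : ∑ i, φ (f i) ≤ 4 * ∑ a, φ a := by
  rw [← Finset.sum_fiberwise (s := Finset.univ) (g := f), Finset.mul_sum]
  refine Finset.sum_le_sum fun a _ => ?_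
  rw [Finset.sum_congr rfl (g := fun _ => φ a)
    (fun i hi => by rw [(Finset.mem_filter.1 hi).2]), Finset.sum_const, nsmul_eq_mul]
  exact mul_le_mul_of_nonneg_right (by exact_mod_cast hf a) (hφ a)

section
variable {n : ℕ} {ι : Type*} [Fintype ι]

lemma norm_bound (S : Finset ι) (w : ι → ℝ) (hw : ∀ k, 0 ≤ w k)
    (X : ι → Fin n → ℝ) (s : Fin n → ℝ) (hs : ∀ i, s i ^ 2 = 1) (f : Fin n → Fin n)
    (hf : ∀ a, (Finset.univ.filter fun i => f i = a).card ≤ 4)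
    (H E : Matrix (Fin n) (Fin n) ℝ) (hH : ∀ i j, H i j = ∑ k, w k * (X k i * X k j))
    (η : ℝ) (hη : 0 ≤ η)
    (hE : ∀ i j, |E i j| ≤ η * ∑ k ∈ S, w k * ((s (f i) * X k (f i)) * (s (f j) * X k (f j)))) :
    specNorm E ≤ 4 * η * specNorm H ∧ froNorm E ≤ 4 * η * froNorm H := by
  classical
  constructor
  · apply specNorm_le_of_bilin _ _ (mul_nonneg (by linarith) (specNorm_nonneg _))
    -- folded vectors
    let F : (Fin n → ℝ) → Fin n → ℝ := fun x a => s a * ∑ i with f i = a, |x i|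
    have hF : ∀ x, ∑ a, F x a ^ 2 ≤ 4 * ∑ i, x i ^ 2 := by
      intro x
      rw [← Finset.sum_fiberwise (s := Finset.univ) (g := f) (f := fun i => x i ^ 2), Finset.mul_sum]
      refine Finset.sum_le_sum fun a _ => ?_
      simp only [F, mul_pow, hs, one_mul]
      refine sq_sum_le_card_mul_sum_sq.trans ?_
      simp only [sq_abs]
      exact mul_le_mul_of_nonneg_right (by exact_mod_cast hf a) (Finset.sum_nonneg fun i _ => sq_nonneg _)
    have hFX : ∀ x k, ∑ i, |x i| * (s (f i) * X k (f i)) = ∑ a, F x a * X k a := by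
      intro x k
      rw [← Finset.sum_fiberwise (s := Finset.univ) (g := f)]
      refine Finset.sum_congr rfl fun a _ => ?_
      simp only [F]
      rw [mul_assoc, mul_comm (Finset.sum _ _), ← mul_assoc, Finset.mul_sum]
      refine Finset.sum_congr rfl fun i hi => ?_
      rw [(Finset.mem_filter.1 hi).2]; ring
    have hq : ∀ v : Fin n → ℝ, ∑ k, w k * (∑ a, v a * X k a) ^ 2 = ∑ i, ∑ j, v i * H i j * v j := by
      intro v
      simp only [hH, Finset.mul_sum, Finset.sum_mul, sq]
      rw [Finset.sum_comm]
      refine Finset.sum_congr rfl fun i _ => ?_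
      rw [Finset.sum_comm]
      refine Finset.sum_congr rfl fun j _ => ?_
      refine Finset.sum_congr rfl fun k _ => ?_
      ring
    intro x y
    calc ∑ i, ∑ j, x i * E i j * y j
        ≤ ∑ i, ∑ j, |x i| * (η * ∑ k ∈ S, w k * ((s (f i) * X k (f i)) * (s (f j) * X k (f j)))) * |y j| := by
          refine Finset.sum_le_sum fun i _ => Finset.sum_le_sum fun j _ => ?_
          refine (le_abs_self _).trans ?_
          rw [abs_mul, abs_mul]
          gcongr
          exact hE i j
      _ = η * ∑ k ∈ S, w k * ((∑ i, |x i| * (s (f i) * X k (f i))) * (∑ j, |y j| * (s (f j) * X k (f j)))) := by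
          simp only [Finset.mul_sum, Finset.sum_mul]
          symm
          rw [Finset.sum_comm]
          simp only [Finset.sum_comm (s := S)]
          rw [Finset.sum_comm]
          refine Finset.sum_congr rfl fun i _ => ?_
          refine Finset.sum_congr rfl fun j _ => ?_
          refine Finset.sum_congr rfl fun k _ => ?_
          ring
      _ ≤ η * ∑ k ∈ S, w k * (((∑ a, F x a * X k a)^2 + (∑ a, F y a * X k a)^2)/2) := by
          refine mul_le_mul_of_nonneg_left (Finset.sum_le_sum fun k _ => ?_) hη
          rw [hFX, hFX]
          refine mul_le_mul_of_nonneg_left ?_ (hw k)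
          nlinarith [sq_nonneg ((∑ a, F x a * X k a) - (∑ a, F y a * X k a))]
      _ ≤ η * ∑ k, w k * (((∑ a, F x a * X k a)^2 + (∑ a, F y a * X k a)^2)/2) := by
          refine mul_le_mul_of_nonneg_left ?_ hη
          refine Finset.sum_le_sum_of_subset_of_nonneg (Finset.subset_univ _) fun k _ _ => ?_
          exact mul_nonneg (hw k) (by positivity)
      _ = η/2 * (∑ k, w k * (∑ a, F x a * X k a)^2 + ∑ k, w k * (∑ a, F y a * X k a)^2) := by
          rw [← Finset.sum_add_distrib, Finset.mul_sum, Finset.mul_sum]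
          exact Finset.sum_congr rfl fun k _ => by ring
      _ ≤ η/2 * (specNorm H * (4 * ∑ i, x i ^ 2) + specNorm H * (4 * ∑ i, y i ^ 2)) := by
          rw [hq, hq]
          have hn := specNorm_nonneg H
          have h1 := (quad_le H (F x)).trans (mul_le_mul_of_nonneg_left (hF x) hn)
          have h2 := (quad_le H (F y)).trans (mul_le_mul_of_nonneg_left (hF y) hn)
          gcongr
      _ = _ := by ring
  · rw [froNorm, froNorm]
    apply Real.sqrt_le_iff.2 ⟨by positivity, ?_⟩
    have hHn : 0 ≤ ∑ i, ∑ j, H i j ^ 2 :=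
      Finset.sum_nonneg fun i _ => Finset.sum_nonneg fun j _ => sq_nonneg _
    rw [mul_pow, Real.sq_sqrt hHn]
    let G : Finset ι → Fin n → Fin n → ℝ := fun T i j => ∑ k ∈ T, w k * (X k i * X k j)
    have h1 : ∀ i j, E i j ^ 2 ≤ η^2 * G S (f i) (f j) ^ 2 := by
      intro i j
      rw [← sq_abs]
      refine (pow_le_pow_left₀ (abs_nonneg _) (hE i j) 2).trans (le_of_eq ?_)
      have : ∑ k ∈ S, w k * ((s (f i) * X k (f i)) * (s (f j) * X k (f j)))
          = s (f i) * s (f j) * G S (f i) (f j) := by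
        simp only [G, Finset.mul_sum]
        exact Finset.sum_congr rfl fun k _ => by ring
      rw [this, mul_pow, mul_pow, mul_pow, hs, hs]; ring
    have hcross : 0 ≤ ∑ i, ∑ j, G S i j * G Sᶜ i j := by
      have : ∑ i, ∑ j, G S i j * G Sᶜ i j
          = ∑ k ∈ S, ∑ l ∈ Sᶜ, w k * w l * (∑ i, X k i * X l i)^2 := by
        have e1 : ∀ i j, G S i j * G Sᶜ i j = ∑ k ∈ S, ∑ l ∈ Sᶜ,
            (w k * (X k i * X k j)) * (w l * (X l i * X l j)) := fun i j => Finset.sum_mul_sum _ _ _ _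
        have e2 : ∀ k l, w k * w l * (∑ i, X k i * X l i)^2 = ∑ i, ∑ j,
            (w k * (X k i * X k j)) * (w l * (X l i * X l j)) := by
          intro k l
          rw [sq, Finset.sum_mul_sum, Finset.mul_sum]
          refine Finset.sum_congr rfl fun i _ => ?_
          rw [Finset.mul_sum]
          exact Finset.sum_congr rfl fun j _ => by ring
        simp only [e1, e2]
        rw [Finset.sum_congr rfl fun i _ => Finset.sum_comm, Finset.sum_comm]
        refine Finset.sum_congr rfl fun k _ => ?_
        rw [Finset.sum_congr rfl fun i _ => Finset.sum_comm, Finset.sum_comm]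
      rw [this]
      exact Finset.sum_nonneg fun k _ => Finset.sum_nonneg fun l _ =>
        mul_nonneg (mul_nonneg (hw k) (hw l)) (sq_nonneg _)
    have hGH : ∑ i, ∑ j, G S i j ^ 2 ≤ ∑ i, ∑ j, H i j ^ 2 := by
      have e : ∀ i j, H i j ^ 2 = G S i j ^ 2 + 2 * (G S i j * G Sᶜ i j) + G Sᶜ i j ^ 2 := by
        intro i j
        have : H i j = G S i j + G Sᶜ i j := by
          rw [hH]; exact (Finset.sum_add_sum_compl S _).symm
        rw [this]; ring
      simp only [e, Finset.sum_add_distrib, ← Finset.mul_sum]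
      have : 0 ≤ ∑ i, ∑ j, G Sᶜ i j ^ 2 :=
        Finset.sum_nonneg fun i _ => Finset.sum_nonneg fun j _ => sq_nonneg _
      linarith
    calc ∑ i, ∑ j, E i j ^ 2 ≤ ∑ i, ∑ j, η^2 * G S (f i) (f j) ^ 2 :=
          Finset.sum_le_sum fun i _ => Finset.sum_le_sum fun j _ => h1 i j
      _ = η^2 * ∑ i, ∑ j, G S (f i) (f j) ^ 2 := by simp only [Finset.mul_sum]
      _ ≤ η^2 * ∑ i, (4 * ∑ b, G S (f i) b ^ 2) := by
          refine mul_le_mul_of_nonneg_left (Finset.sum_le_sum fun i _ => ?_) (sq_nonneg _)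
          exact sum_comp_le f hf (fun b => G S (f i) b ^ 2) fun _ => sq_nonneg _
      _ ≤ η^2 * (4 * ∑ a, (4 * ∑ b, G S a b ^ 2)) := by
          refine mul_le_mul_of_nonneg_left ?_ (sq_nonneg _)
          exact sum_comp_le f hf (fun a => 4 * ∑ b, G S a b ^ 2) fun _ => by positivity
      _ = (4*η)^2 * ∑ a, ∑ b, G S a b ^ 2 := by rw [← Finset.mul_sum]; ring
      _ ≤ _ := by gcongr
end

lemma fiber_div (n : ℕ) (u : Fin n → ℕ) (hu : Function.Injective u) (v : ℕ) :
    (Finset.univ.filter fun i : Fin n => u i / 4 = v).card ≤ 4 := by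
  have : (Finset.univ.filter fun i : Fin n => u i / 4 = v).card ≤ (Finset.range 4).card := by
    apply Finset.card_le_card_of_injOn (fun i => u i % 4)
    · intro i _; simp; omega
    · intro i hi j hj hij
      simp at hi hj hij
      apply hu; omega
  simpa using this

section
variable {n : ℕ} {ι : Type*} [Fintype ι]

def GoodPart (n r : ℕ) (η : ℝ) (S : Finset ι) (w x : ι → ℝ) (H : Matrix (Fin n) (Fin n) ℝ) : Prop :=
  ∃ g : ℕ → ℝ, (Matrix.of fun i j : Fin n => g ((i:ℕ)+(j:ℕ))).rank ≤ r ∧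
    specNorm (Matrix.of fun i j : Fin n => ∑ k ∈ S, w k * x k ^ ((i:ℕ)+(j:ℕ)) - g ((i:ℕ)+(j:ℕ)))
      ≤ 4 * η * specNorm H ∧
    froNorm (Matrix.of fun i j : Fin n => ∑ k ∈ S, w k * x k ^ ((i:ℕ)+(j:ℕ)) - g ((i:ℕ)+(j:ℕ)))
      ≤ 4 * η * froNorm H

lemma rank_sign (g : ℕ → ℝ) (σ : ℝ) :
    (Matrix.of fun i j : Fin n => σ ^ ((i:ℕ)+(j:ℕ)) * g ((i:ℕ)+(j:ℕ))).rank
      ≤ (Matrix.of fun i j : Fin n => g ((i:ℕ)+(j:ℕ))).rank := by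
  have : (Matrix.of fun i j : Fin n => σ ^ ((i:ℕ)+(j:ℕ)) * g ((i:ℕ)+(j:ℕ)))
      = Matrix.diagonal (fun i : Fin n => σ ^ (i:ℕ)) * (Matrix.of fun i j : Fin n => g ((i:ℕ)+(j:ℕ)))
        * Matrix.diagonal (fun i : Fin n => σ ^ (i:ℕ)) := by
    ext i j
    rw [Matrix.mul_diagonal, Matrix.diagonal_mul]
    simp only [Matrix.of_apply, pow_add]; ring
  rw [this]
  exact (Matrix.rank_mul_le_left _ _).trans (Matrix.rank_mul_le_right _ _)

lemma rank_rev (g : ℕ → ℝ) :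
    (Matrix.of fun i j : Fin n => g (2 * (n-1) - ((i:ℕ)+(j:ℕ)))).rank
      ≤ (Matrix.of fun i j : Fin n => g ((i:ℕ)+(j:ℕ))).rank := by
  have : (Matrix.of fun i j : Fin n => g (2 * (n-1) - ((i:ℕ)+(j:ℕ))))
      = (Matrix.of fun i j : Fin n => g ((i:ℕ)+(j:ℕ))).submatrix Fin.revPerm Fin.revPerm := by
    ext i j
    simp only [Matrix.of_apply, Matrix.submatrix_apply, Fin.revPerm_apply, Fin.val_rev]
    congr 1; omega
  rw [this, Matrix.rank_submatrix]

lemma part_small (S : Finset ι) (K p : ℕ) (hn : 1 ≤ n) (hK : 2 * n ≤ 2 ^ K)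
    (w x : ι → ℝ) (hw : ∀ k, 0 ≤ w k) (σ : ℝ) (hσ : σ ^ 2 = 1)
    (hx0 : ∀ k ∈ S, 0 ≤ σ * x k) (hx1 : ∀ k ∈ S, σ * x k ≤ 1)
    (H : Matrix (Fin n) (Fin n) ℝ) (hH : ∀ i j : Fin n, H i j = ∑ k, w k * x k ^ ((i:ℕ)+(j:ℕ))) :
    GoodPart n ((K+2)*p) (2 * (2/3)^p) S w x H := by
  obtain ⟨g, hg, hgE⟩ := class_approx S n K p hn hK w (fun k => σ * x k) (fun k _ => hw k) hx0 hx1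
  have hσm : ∀ m : ℕ, σ ^ m * σ ^ m = 1 := fun m => by
    rw [← pow_add, ← two_mul, pow_mul, hσ, one_pow]
  refine ⟨fun m => σ ^ m * g m, (rank_sign g σ).trans hg, ?_⟩
  refine norm_bound S w hw (fun k i => x k ^ (i:ℕ)) (fun i => σ ^ (i:ℕ))
    (fun i => by rw [sq]; exact hσm _) (fun i => ⟨(i:ℕ)/4, by omega⟩) ?_ H _ ?_ _ (by positivity) ?_
  · intro a
    simpa [Fin.ext_iff] using fiber_div n (fun i => (i:ℕ)) Fin.val_injective (a:ℕ)
  · intro i j; rw [hH]; simp only [pow_add]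
  · intro i j
    have h := hgE i j i.2 j.2
    have e : ∑ k ∈ S, w k * x k ^ ((i:ℕ)+(j:ℕ)) - σ ^ ((i:ℕ)+(j:ℕ)) * g ((i:ℕ)+(j:ℕ))
        = σ ^ ((i:ℕ)+(j:ℕ)) * (∑ k ∈ S, w k * (σ * x k) ^ ((i:ℕ)+(j:ℕ)) - g ((i:ℕ)+(j:ℕ))) := by
      rw [mul_sub, Finset.mul_sum]
      congr 1
      refine Finset.sum_congr rfl fun k _ => ?_
      rw [mul_pow]
      linear_combination (-(w k * x k ^ ((i:ℕ)+(j:ℕ)))) * hσm ((i:ℕ)+(j:ℕ))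
    have e2 : |σ ^ ((i:ℕ)+(j:ℕ))| = 1 := by
      have := hσm ((i:ℕ)+(j:ℕ))
      rcases mul_self_eq_one_iff.1 this with h | h <;> rw [h] <;> simp
    simp only [Matrix.of_apply]
    rw [e, abs_mul, e2, one_mul]
    simpa only [mul_pow] using h

lemma part_large (S : Finset ι) (K p : ℕ) (hn : 1 ≤ n) (hK : 2 * n ≤ 2 ^ K)
    (w x : ι → ℝ) (hw : ∀ k, 0 ≤ w k) (σ : ℝ) (hσ : σ ^ 2 = 1)
    (hx1 : ∀ k ∈ S, 1 ≤ σ * x k)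
    (H : Matrix (Fin n) (Fin n) ℝ) (hH : ∀ i j : Fin n, H i j = ∑ k, w k * x k ^ ((i:ℕ)+(j:ℕ))) :
    GoodPart n ((K+2)*p) (2 * (2/3)^p) S w x H := by
  have hpos : ∀ k ∈ S, 0 < σ * x k := fun k hk => by linarith [hx1 k hk]
  obtain ⟨g, hg, hgE⟩ := class_approx S n K p hn hK (fun k => w k * (σ * x k)^(2*(n-1)))
    (fun k => (σ * x k)⁻¹) (fun k hk => mul_nonneg (hw k) (pow_nonneg (hpos k hk).le _))
    (fun k hk => inv_nonneg.2 (hpos k hk).le) (fun k hk => inv_le_one_of_one_le₀ (hx1 k hk))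
  have hσm : ∀ m : ℕ, σ ^ m * σ ^ m = 1 := fun m => by
    rw [← pow_add, ← two_mul, pow_mul, hσ, one_pow]
  refine ⟨fun m => σ ^ m * g (2*(n-1) - m),
    (rank_sign (fun m => g (2*(n-1) - m)) σ).trans ((rank_rev g).trans hg), ?_⟩
  refine norm_bound S w hw (fun k i => x k ^ (i:ℕ)) (fun i => σ ^ (i:ℕ))
    (fun i => by rw [sq]; exact hσm _) (fun i => ⟨(n-1) - (n-1-(i:ℕ))/4, by omega⟩) ?_ H _ ?_ _
    (by positivity) ?_
  · intro a
    refine le_trans (Finset.card_le_card ?_) (fiber_div n (fun i => n-1-(i:ℕ)) ?_ (n-1-(a:ℕ)))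
    · intro i
      simp only [Finset.mem_filter, Finset.mem_univ, true_and, Fin.ext_iff]
      intro h; omega
    · intro i j h; simp only at h; apply Fin.ext; omega
  · intro i j; rw [hH]; simp only [pow_add]
  · intro i j
    have h := hgE (n-1-i) (n-1-j) (by omega) (by omega)
    have hidx : (n-1-(i:ℕ)) + (n-1-(j:ℕ)) = 2*(n-1) - ((i:ℕ)+(j:ℕ)) := by omega
    rw [hidx] at h
    have hy : ∀ k ∈ S, ∀ m : ℕ, m ≤ 2*(n-1) →
        (σ * x k)^(2*(n-1)) * ((σ * x k)⁻¹)^(2*(n-1) - m) = (σ * x k)^m := by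
      intro k hk m hm
      have := (hpos k hk).ne'
      have e : (σ * x k)^(2*(n-1)) = (σ * x k)^m * (σ * x k)^(2*(n-1) - m) := by
        rw [← pow_add]; congr 1; omega
      rw [e, mul_assoc, ← mul_pow, mul_inv_cancel₀ this, one_pow, mul_one]
    have e : ∑ k ∈ S, w k * x k ^ ((i:ℕ)+(j:ℕ)) - σ ^ ((i:ℕ)+(j:ℕ)) * g (2*(n-1) - ((i:ℕ)+(j:ℕ)))
        = σ ^ ((i:ℕ)+(j:ℕ)) * (∑ k ∈ S, w k * (σ * x k)^(2*(n-1)) * ((σ * x k)⁻¹) ^ (2*(n-1) - ((i:ℕ)+(j:ℕ)))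
          - g (2*(n-1) - ((i:ℕ)+(j:ℕ)))) := by
      rw [mul_sub, Finset.mul_sum]
      congr 1
      refine Finset.sum_congr rfl fun k hk => ?_
      rw [mul_assoc (w k), hy k hk _ (by omega), mul_pow]
      linear_combination (-(w k * x k ^ ((i:ℕ)+(j:ℕ)))) * hσm ((i:ℕ)+(j:ℕ))
    have e2 : |σ ^ ((i:ℕ)+(j:ℕ))| = 1 := by
      have := hσm ((i:ℕ)+(j:ℕ))
      rcases mul_self_eq_one_iff.1 this with h | h <;> rw [h] <;> simp
    simp only [Matrix.of_apply]
    rw [e, abs_mul, e2, one_mul]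
    refine h.trans (le_of_eq ?_)
    congr 1
    refine Finset.sum_congr rfl fun k hk => ?_
    rw [← mul_pow, ← mul_pow, ← pow_add, ← pow_add, mul_assoc]
    congr 1
    rw [← hy k hk ((n-1) - (n-1-(i:ℕ))/4 + ((n-1) - (n-1-(j:ℕ))/4)) (by omega)]
    congr 2
    omega
end

lemma pd_approx {n : ℕ} (K p : ℕ) (hn : 1 ≤ n) (hK : 2 * n ≤ 2 ^ K)
    (H : Matrix (Fin n) (Fin n) ℝ) (hPD : H.PosDef) (hHk : IsHankel H) :
    ∃ Hhat : Matrix (Fin n) (Fin n) ℝ, IsHankel Hhat ∧ Hhat.rank ≤ 4 * ((K+2)*p) ∧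
      specNorm (H - Hhat) ≤ 32 * (2/3)^p * specNorm H ∧
      froNorm (H - Hhat) ≤ 32 * (2/3)^p * froNorm H := by
  classical
  obtain ⟨w, x, hw, hH⟩ := hankel_rep hn H hPD hHk
  obtain ⟨g1, r1, s1, f1⟩ := part_small (Finset.univ.filter fun k => 0 ≤ x k ∧ x k ≤ 1) K p hn hK w x hw
    1 (by norm_num) (by intro k hk; simp at hk; linarith) (by intro k hk; simp at hk; linarith) H hH
  obtain ⟨g2, r2, s2, f2⟩ := part_small (Finset.univ.filter fun k => x k < 0 ∧ -1 ≤ x k) K p hn hK w x hw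
    (-1) (by norm_num) (by intro k hk; simp at hk; linarith) (by intro k hk; simp at hk; linarith) H hH
  obtain ⟨g3, r3, s3, f3⟩ := part_large (Finset.univ.filter fun k => 1 < x k) K p hn hK w x hw
    1 (by norm_num) (by intro k hk; simp at hk; linarith) H hH
  obtain ⟨g4, r4, s4, f4⟩ := part_large (Finset.univ.filter fun k => x k < -1) K p hn hK w x hw
    (-1) (by norm_num) (by intro k hk; simp at hk; linarith) H hH
  set M1 := (Matrix.of fun i j : Fin n => g1 ((i:ℕ)+(j:ℕ))) with hM1
  set M2 := (Matrix.of fun i j : Fin n => g2 ((i:ℕ)+(j:ℕ))) with hM2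
  set M3 := (Matrix.of fun i j : Fin n => g3 ((i:ℕ)+(j:ℕ))) with hM3
  set M4 := (Matrix.of fun i j : Fin n => g4 ((i:ℕ)+(j:ℕ))) with hM4
  have hdec : H - (M1 + M2 + M3 + M4) =
      (Matrix.of fun i j : Fin n => ∑ k with 0 ≤ x k ∧ x k ≤ 1, w k * x k ^ ((i:ℕ)+(j:ℕ)) - g1 ((i:ℕ)+(j:ℕ)))
      + (Matrix.of fun i j : Fin n => ∑ k with x k < 0 ∧ -1 ≤ x k, w k * x k ^ ((i:ℕ)+(j:ℕ)) - g2 ((i:ℕ)+(j:ℕ)))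
      + (Matrix.of fun i j : Fin n => ∑ k with 1 < x k, w k * x k ^ ((i:ℕ)+(j:ℕ)) - g3 ((i:ℕ)+(j:ℕ)))
      + (Matrix.of fun i j : Fin n => ∑ k with x k < -1, w k * x k ^ ((i:ℕ)+(j:ℕ)) - g4 ((i:ℕ)+(j:ℕ))) := by
    ext i j
    have hsum : H i j = ∑ k with 0 ≤ x k ∧ x k ≤ 1, w k * x k ^ ((i:ℕ)+(j:ℕ))
        + ∑ k with x k < 0 ∧ -1 ≤ x k, w k * x k ^ ((i:ℕ)+(j:ℕ))
        + ∑ k with 1 < x k, w k * x k ^ ((i:ℕ)+(j:ℕ))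
        + ∑ k with x k < -1, w k * x k ^ ((i:ℕ)+(j:ℕ)) := by
      rw [hH]
      simp only [Finset.sum_filter]
      rw [← Finset.sum_add_distrib, ← Finset.sum_add_distrib, ← Finset.sum_add_distrib]
      refine Finset.sum_congr rfl fun k _ => ?_
      rcases lt_or_ge (x k) (-1) with h | h
      · rw [if_neg (fun h' => by linarith [h'.1]), if_neg (fun h' => by linarith [h'.2]),
          if_neg (by linarith), if_pos h]; ring
      · rcases lt_or_ge (x k) 0 with h2 | h2
        · rw [if_neg (fun h' => by linarith [h'.1]), if_pos ⟨h2, h⟩,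
            if_neg (by linarith), if_neg (by linarith)]; ring
        · rcases le_or_gt (x k) 1 with h3 | h3
          · rw [if_pos ⟨h2, h3⟩, if_neg (fun h' => by linarith [h'.1]),
              if_neg (by linarith), if_neg (by linarith)]; ring
          · rw [if_neg (fun h' => by linarith [h'.2]), if_neg (fun h' => by linarith [h'.1]),
              if_pos h3, if_neg (by linarith)]; ring
    simp only [Matrix.sub_apply, Matrix.add_apply, hM1, hM2, hM3, hM4, Matrix.of_apply]
    rw [hsum]; ring
  refine ⟨M1 + M2 + M3 + M4, ?_, ?_, ?_, ?_⟩
  · intro i j k l h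
    simp only [Matrix.add_apply, hM1, hM2, hM3, hM4, Matrix.of_apply, h]
  · have h1 := rank_add_le' (M1 + M2 + M3) M4
    have h2 := rank_add_le' (M1 + M2) M3
    have h3 := rank_add_le' M1 M2
    omega
  · rw [hdec]
    refine (specNorm_add _ _).trans ((add_le_add ((specNorm_add _ _).trans
      (add_le_add ((specNorm_add _ _).trans (add_le_add s1 s2)) s3)) s4).trans (le_of_eq (by ring)))
  · rw [hdec]
    refine (froNorm_add _ _).trans ((add_le_add ((froNorm_add _ _).trans
      (add_le_add ((froNorm_add _ _).trans (add_le_add f1 f2)) f3)) f4).trans (le_of_eq (by ring)))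

/-- There is an absolute constant `C > 0` such that every PSD Hankel matrix
`H ∈ ℝ^{n×n}` (for `n ≥ 2`, `ε ∈ (0,1/2)`) admits a Hankel approximation `Ĥ` of rank at most
`C · ln n · ln (1/ε)` with `‖H − Ĥ‖₂ ≤ ε‖H‖₂` and `‖H − Ĥ‖_F ≤ ε‖H‖_F`. -/
theorem hankel_low_rank_approx_exists :
    ∃ C : ℝ, 0 < C ∧
      ∀ (n : ℕ), 2 ≤ n → ∀ ε : ℝ, 0 < ε → ε < 1 / 2 →
        ∀ H : Matrix (Fin n) (Fin n) ℝ, H.PosSemidef → IsHankel H →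
          ∃ Hhat : Matrix (Fin n) (Fin n) ℝ, IsHankel Hhat ∧
            (Hhat.rank : ℝ) ≤ C * Real.log n * Real.log (1 / ε) ∧
            specNorm (H - Hhat) ≤ ε * specNorm H ∧
            froNorm (H - Hhat) ≤ ε * froNorm H := by
  refine ⟨1000, by norm_num, ?_⟩
  intro n hn ε hε0 hε1 H hPSD hHk
  set L := Real.log (1/ε) with hL
  have hl2 := Real.log_two_gt_d9
  have hLn : Real.log 2 ≤ Real.log n := Real.log_le_log (by norm_num) (by exact_mod_cast hn)
  have hL2 : Real.log 2 ≤ L := Real.log_le_log (by norm_num) (by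
    rw [le_div_iff₀ hε0]; linarith)
  by_cases hH0 : H = 0
  · refine ⟨0, fun _ _ _ _ _ => rfl, ?_, ?_, ?_⟩
    · rw [Matrix.rank_zero, Nat.cast_zero]
      exact mul_nonneg (mul_nonneg (by norm_num) (by linarith)) (by linarith)
    · rw [sub_zero, hH0, specNorm_eq, map_zero, norm_zero, mul_zero]
    · rw [sub_zero, hH0]; simp [froNorm]
  have hs := specNorm_pos H hH0
  have hf := froNorm_pos H hH0
  obtain ⟨P, hP, hPk⟩ := exists_posDef_hankel n
  obtain ⟨δ, hδ, hδs, hδf⟩ : ∃ δ : ℝ, 0 < δ ∧ δ * specNorm P ≤ ε/4 * specNorm H ∧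
      δ * froNorm P ≤ ε/4 * froNorm H := by
    have a1 := specNorm_nonneg P
    have a2 := froNorm_nonneg P
    have b1 : 0 < ε/4 * specNorm H := by positivity
    have b2 : 0 < ε/4 * froNorm H := by positivity
    have c1 : 0 < ε/4 * specNorm H / (specNorm P + 1) := by positivity
    have c2 : 0 < ε/4 * froNorm H / (froNorm P + 1) := by positivity
    refine ⟨min _ _, lt_min c1 c2, ?_, ?_⟩
    · refine (mul_le_mul_of_nonneg_right (min_le_left _ _) a1).trans ?_
      rw [div_mul_eq_mul_div, div_le_iff₀ (by positivity)]
      nlinarith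
    · refine (mul_le_mul_of_nonneg_right (min_le_right _ _) a2).trans ?_
      rw [div_mul_eq_mul_div, div_le_iff₀ (by positivity)]
      nlinarith
  have hK : 2 * n ≤ 2 ^ (Nat.log 2 n + 2) := by
    have := Nat.lt_pow_succ_log_self (b := 2) (by norm_num) n
    rw [pow_succ] at this ⊢
    rw [pow_succ]
    omega
  set p := ⌈24 * L⌉₊ with hp
  have hp1 : 24 * L ≤ p := Nat.le_ceil _
  have hp2 : (p:ℝ) < 24 * L + 1 := Nat.ceil_lt_add_one (by linarith)
  have hpe : 32 * (2/3:ℝ)^p ≤ ε/4 := by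
    have h1 : (2/3:ℝ) ≤ Real.exp (-(1/3)) := by
      have := Real.add_one_le_exp (-(1/3):ℝ); linarith
    have h2 : (2/3:ℝ)^p ≤ Real.exp (-(1/3)) ^ p := by gcongr
    have h3 : Real.exp (-(1/3)) ^ p ≤ Real.exp (-L) ^ 8 := by
      rw [← Real.exp_nat_mul, ← Real.exp_nat_mul]
      apply Real.exp_le_exp.2
      push_cast; linarith
    have h4 : Real.exp (-L) = ε := by
      rw [hL, one_div, Real.log_inv, neg_neg, Real.exp_log hε0]
    have h5 : ε ^ 7 ≤ (1/2)^7 := by gcongr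
    rw [h4] at h3
    have h6 : ε^8 ≤ (1/2)^7 * ε := by rw [pow_succ]; gcongr
    norm_num at h6
    linarith
  obtain ⟨Hhat, hk, hr, hsp, hfr⟩ := pd_approx (Nat.log 2 n + 2) p (by omega) hK (H + δ • P)
    (Matrix.PosDef.posSemidef_add hPSD (hP.smul hδ))
    (fun i j k l h => by
      simp only [Matrix.add_apply, Matrix.smul_apply]; rw [hHk i j k l h, hPk i j k l h])
  have hdec : H - Hhat = (H + δ • P - Hhat) + (-δ) • P := by
    ext i j
    simp only [Matrix.sub_apply, Matrix.add_apply, Matrix.smul_apply, smul_eq_mul]; ring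
  refine ⟨Hhat, hk, ?_, ?_, ?_⟩
  · have hlog : (Nat.log 2 n : ℝ) * Real.log 2 ≤ Real.log n := by
      rw [← Real.log_pow]
      apply Real.log_le_log (by positivity)
      exact_mod_cast Nat.pow_log_le_self 2 (by omega)
    have hK8 : (Nat.log 2 n : ℝ) + 4 ≤ 8 * Real.log n := by
      have : (0:ℝ) ≤ Nat.log 2 n := by positivity
      nlinarith
    have hp26 : (p:ℝ) ≤ 26 * L := by linarith
    have hr' : (Hhat.rank : ℝ) ≤ 4 * (((Nat.log 2 n : ℝ) + 4) * p) := by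
      have : (Hhat.rank : ℝ) ≤ ((4 * ((Nat.log 2 n + 2 + 2)*p) : ℕ) : ℝ) := by exact_mod_cast hr
      refine this.trans (le_of_eq ?_)
      push_cast; ring
    have hm : ((Nat.log 2 n : ℝ) + 4) * p ≤ (8 * Real.log n) * (26 * L) := by
      have : 0 ≤ 8 * Real.log n := by linarith
      gcongr
    have hpos : 0 ≤ Real.log n * L := mul_nonneg (by linarith) (by linarith)
    nlinarith
  · rw [hdec]
    have h1 := specNorm_add (H + δ • P - Hhat) ((-δ) • P)
    have h2 := specNorm_add H (δ • P)
    rw [specNorm_smul, abs_neg, abs_of_pos hδ] at h1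
    rw [specNorm_smul, abs_of_pos hδ] at h2
    have h3 := mul_le_mul_of_nonneg_right hpe (specNorm_nonneg (H + δ • P))
    have h4 : specNorm (H + δ • P) ≤ 2 * specNorm H := by nlinarith
    have h5 := mul_le_mul_of_nonneg_left h4 (by linarith : 0 ≤ ε/4)
    have h6 : 0 < ε * specNorm H := by positivity
    linarith
  · rw [hdec]
    have h1 := froNorm_add (H + δ • P - Hhat) ((-δ) • P)
    have h2 := froNorm_add H (δ • P)
    rw [froNorm_smul, abs_neg, abs_of_pos hδ] at h1
    rw [froNorm_smul, abs_of_pos hδ] at h2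
    have h3 := mul_le_mul_of_nonneg_right hpe (froNorm_nonneg (H + δ • P))
    have h4 : froNorm (H + δ • P) ≤ 2 * froNorm H := by nlinarith
    have h5 := mul_le_mul_of_nonneg_left h4 (by linarith : 0 ≤ ε/4)
    have h6 : 0 < ε * froNorm H := by positivity
    linarith
end

section
/- There is an absolute constant C > 0 such that for every integer n ≥ 2, every ε ∈ (0, 1/2), and every positive definite Hankel matrix H ∈ ℝ^{n×n}, if k is any integer with C·(ln n)·ln(1/ε) ≤ k ≤ n, then the best rank-k approximation H_k of H satisfies ‖H − H_k‖_F ≤ ε‖H‖_F. -/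
open scoped BigOperators

section helpers
open Matrix


theorem hankel_seq {n : ℕ} (H : Matrix (Fin n) (Fin n) ℝ) (hH : IsHankel H) :
    ∃ h : ℕ → ℝ, ∀ i j : Fin n, H i j = h (i + j) := by
  classical
  refine ⟨fun m => if hm : ∃ p : Fin n × Fin n, (p.1 : ℕ) + p.2 = m then
    H hm.choose.1 hm.choose.2 else 0, fun i j => ?_⟩
  have hm : ∃ p : Fin n × Fin n, (p.1 : ℕ) + p.2 = (i + j : ℕ) := ⟨(i, j), rfl⟩
  simp only [dif_pos hm]
  exact hH _ _ _ _ hm.choose_spec.symm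

section
open scoped MatrixOrder ComplexOrder Matrix.Norms.L2Operator
theorem psd_factor {n : ℕ} (H : Matrix (Fin n) (Fin n) ℝ) (hp : H.PosSemidef) :
    ∃ R : Matrix (Fin n) (Fin n) ℝ, H = Rᵀ * R := by
  obtain ⟨B, hB⟩ := CStarAlgebra.nonneg_iff_eq_star_mul_self.mp hp.nonneg
  exact ⟨B, by rw [hB, star_eq_conjTranspose, conjTranspose_eq_transpose_of_trivial]⟩
end

theorem hankel_repr {n : ℕ} (H : Matrix (Fin n) (Fin n) ℝ) (hp : H.PosDef) (hH : IsHankel H) :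
    ∃ x w : Fin n → ℝ, (∀ l, 0 ≤ w l) ∧
      ∀ i j : Fin n, H i j = ∑ l, w l * x l ^ ((i : ℕ) + j) := by
  obtain ⟨h, hh⟩ := hankel_seq H hH
  obtain ⟨R, hR⟩ := psd_factor H hp.posSemidef
  have hdet : IsUnit R.det := by
    have := hp.det_pos
    rw [hR, det_mul, det_transpose] at this
    rw [isUnit_iff_ne_zero]
    intro h0
    simp [h0] at this
  set H' : Matrix (Fin n) (Fin n) ℝ := Matrix.of fun i j => h (i + j + 1) with hH'
  have hs : H'ᵀ = H' := by
    ext i j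
    simp [hH', add_comm (i : ℕ)]
  set A := (R⁻¹)ᵀ * H' * R⁻¹ with hA
  have hAh : A.IsHermitian := by
    rw [IsHermitian, conjTranspose_eq_transpose_of_trivial, hA]
    simp [transpose_mul, hs, Matrix.mul_assoc]
  have hAR : ∀ a i : Fin n, ∀ hi : (i : ℕ) + 1 < n, (A * R) a i = R a ⟨i + 1, hi⟩ := by
    intro a i hi
    have e1 : A * R = (R⁻¹)ᵀ * H' := by
      rw [hA, Matrix.mul_assoc, nonsing_inv_mul _ hdet, Matrix.mul_one]
    have e2 : (R⁻¹)ᵀ * H = R := by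
      rw [hR, ← Matrix.mul_assoc, ← transpose_mul, mul_nonsing_inv _ hdet]; simp
    rw [e1]
    conv_rhs => rw [← e2]
    simp only [mul_apply]
    refine Finset.sum_congr rfl fun b _ => ?_
    rw [hh]
    simp [hH', add_assoc]
  set U : Matrix (Fin n) (Fin n) ℝ := (hAh.eigenvectorUnitary : Matrix (Fin n) (Fin n) ℝ) with hU
  have hU1 : star U * U = 1 := Unitary.coe_star_mul_self hAh.eigenvectorUnitary
  have hU2 : U * star U = 1 := Unitary.coe_mul_star_self hAh.eigenvectorUnitary
  have hst : star U = Uᵀ := by rw [star_eq_conjTranspose, conjTranspose_eq_transpose_of_trivial]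
  rw [hst] at hU1 hU2
  have hsp : A = U * diagonal hAh.eigenvalues * Uᵀ := by
    have := hAh.spectral_theorem
    rw [Unitary.conjStarAlgAut_apply] at this
    rw [← hst]
    exact this
  set G := Uᵀ * R with hG
  have hrec : ∀ a i : Fin n, ∀ hi : (i : ℕ) + 1 < n,
      G a ⟨i + 1, hi⟩ = hAh.eigenvalues a * G a i := by
    intro a i hi
    have e : diagonal hAh.eigenvalues * G = Uᵀ * (A * R) := by
      conv_rhs => rw [hsp]
      rw [hG]
      simp only [← Matrix.mul_assoc]
      rw [hU1, Matrix.one_mul]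
    have := congrFun (congrFun e a) i
    rw [diagonal_mul] at this
    rw [this, hG]
    rw [Matrix.mul_apply, Matrix.mul_apply]
    exact Finset.sum_congr rfl fun b _ => by rw [hAR b i hi]
  have hGG : H = Gᵀ * G := by
    rw [hG, transpose_mul, transpose_transpose, hR, Matrix.mul_assoc, ← Matrix.mul_assoc U, hU2,
      Matrix.one_mul]
  rcases Nat.eq_zero_or_pos n with rfl | hn
  · exact ⟨fun _ => 0, fun _ => 0, fun _ => le_rfl, fun i => i.elim0⟩
  have hpow : ∀ a : Fin n, ∀ i : ℕ, ∀ hi : i < n,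
      G a ⟨i, hi⟩ = hAh.eigenvalues a ^ i * G a ⟨0, hn⟩ := by
    intro a i
    induction i with
    | zero => intro hi; simp
    | succ i ih =>
      intro hi
      rw [hrec a ⟨i, by omega⟩ hi, ih, pow_succ]; ring
  refine ⟨hAh.eigenvalues, fun l => G l ⟨0, hn⟩ ^ 2, fun l => sq_nonneg _, fun i j => ?_⟩
  rw [hGG, mul_apply]
  refine Finset.sum_congr rfl fun l _ => ?_
  rw [transpose_apply, hpow l i i.2, hpow l j j.2, pow_add]; ring


def pv (n : ℕ) (x : ℝ) : Fin n → ℝ := fun j => x ^ (j : ℕ)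

def Good (n : ℕ) (f : ℝ → ℝ) (K : ℕ) : Prop :=
  ∃ (N : Matrix (Fin n) (Fin n) ℝ) (W : Submodule ℝ (Fin n → ℝ)), Module.finrank ℝ W ≤ K ∧
    (∀ z, (z ᵥ* N) ⬝ᵥ (z ᵥ* N) ≤ z ⬝ᵥ z) ∧
    ∀ x, 0 ≤ x → x < 1 → pv n x - f x • (pv n x ᵥ* N) ∈ W

theorem good_one (n : ℕ) : Good n (fun _ => 1) 0 :=
  ⟨1, ⊥, by simp, by simp, by simp⟩

theorem good_mul {n : ℕ} {f g : ℝ → ℝ} {K L : ℕ} (hf : Good n f K) (hg : Good n g L) :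
    Good n (fun x => f x * g x) (K + L) := by
  obtain ⟨N, W, h1, h2, h3⟩ := hf
  obtain ⟨N', W', h1', h2', h3'⟩ := hg
  refine ⟨N * N', W.map N'.vecMulLinear ⊔ W', ?_, ?_, ?_⟩
  · refine (Submodule.finrank_add_le_finrank_add_finrank _ _).trans ?_
    have := Submodule.finrank_map_le N'.vecMulLinear W
    omega
  · intro z
    rw [← vecMul_vecMul]
    exact (h2' _).trans (h2 z)
  · intro x hx hx1
    have e : pv n x - (f x * g x) • (pv n x ᵥ* (N * N')) =
        g x • ((pv n x - f x • (pv n x ᵥ* N)) ᵥ* N') + (pv n x - g x • (pv n x ᵥ* N')) := by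
      rw [← vecMul_vecMul, sub_vecMul, smul_vecMul]
      ext i
      simp
      ring
    rw [e]
    refine Submodule.add_mem_sup (Submodule.smul_mem _ _ ?_) (h3' x hx hx1)
    exact Submodule.mem_map_of_mem (f := N'.vecMulLinear) (h3 x hx hx1)

theorem good_pow {n : ℕ} {f : ℝ → ℝ} {K : ℕ} (hf : Good n f K) (m : ℕ) :
    Good n (fun x => f x ^ m) (m * K) := by
  induction m with
  | zero => simpa using good_one n
  | succ m ih => simpa [pow_succ, Nat.succ_mul] using good_mul ih hf

theorem good_prod {n : ℕ} {f : ℕ → ℝ → ℝ} {K : ℕ} (hf : ∀ i, Good n (f i) K) (m : ℕ) :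
    Good n (fun x => ∏ i ∈ Finset.range m, f i x) (m * K) := by
  induction m with
  | zero => simpa using good_one n
  | succ m ih => simpa [Finset.prod_range_succ, Nat.succ_mul] using good_mul ih (hf m)

def Ysh (n : ℕ) : Matrix (Fin n) (Fin n) ℝ := Matrix.of fun i j => if (i : ℕ) + 1 = j then 1 else 0

theorem vecMul_Ysh_zero {k : ℕ} (z : Fin (k + 1) → ℝ) : (z ᵥ* Ysh (k + 1)) 0 = 0 := by
  simp [vecMul, dotProduct, Ysh]

theorem vecMul_Ysh_succ {k : ℕ} (z : Fin (k + 1) → ℝ) (j : Fin k) :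
    (z ᵥ* Ysh (k + 1)) j.succ = z j.castSucc := by
  simp only [vecMul, dotProduct, Ysh, of_apply, Fin.val_succ]
  rw [Finset.sum_eq_single j.castSucc]
  · simp
  · intro b _ hb
    have : (b : ℕ) ≠ j := fun h => hb (Fin.ext h)
    simp [this]
  · simp

theorem Ysh_contr {k : ℕ} (z : Fin (k + 1) → ℝ) :
    (z ᵥ* Ysh (k + 1)) ⬝ᵥ (z ᵥ* Ysh (k + 1)) ≤ z ⬝ᵥ z := by
  simp only [dotProduct]
  rw [Fin.sum_univ_succ, Fin.sum_univ_castSucc (fun i => z i * z i)]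
  simp only [vecMul_Ysh_zero, vecMul_Ysh_succ]
  nlinarith [mul_self_nonneg (z (Fin.last k))]

theorem pv_Ysh {k : ℕ} (x : ℝ) :
    pv (k + 1) x - x • (pv (k + 1) x ᵥ* Ysh (k + 1)) = Pi.single 0 1 := by
  ext j
  refine Fin.cases ?_ (fun j => ?_) j
  · simp [vecMul_Ysh_zero, pv]
  · simp [vecMul_Ysh_succ, pv, pow_succ]; ring

theorem good_Y (k : ℕ) : Good (k + 1) (fun x => x) 1 := by
  refine ⟨Ysh (k + 1), Submodule.span ℝ {Pi.single 0 1}, (finrank_span_le_card _).trans (by simp),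
    Ysh_contr, fun x _ _ => ?_⟩
  rw [pv_Ysh]
  exact Submodule.mem_span_singleton_self _

theorem X_acc {k : ℕ} (g : Fin (k + 1) → ℝ) :
    0 ≤ (g ᵥ* (1 - Ysh (k + 1))) ⬝ᵥ g := by
  rw [vecMul_sub, vecMul_one, sub_dotProduct]
  have h1 := Ysh_contr g
  set y := g ᵥ* Ysh (k + 1)
  have : 0 ≤ (g - y) ⬝ᵥ (g - y) := Finset.sum_nonneg fun i _ => mul_self_nonneg _
  simp only [sub_dotProduct, dotProduct_sub] at this
  rw [dotProduct_comm g y] at this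
  linarith

theorem good_tau (k : ℕ) (t : ℝ) (ht : 0 < t) :
    Good (k + 1) (fun x => (1 - x - t * x) / (1 - x + t * x)) 1 := by
  set X := 1 - Ysh (k + 1) with hX
  set P := X + t • (1 : Matrix (Fin (k + 1)) (Fin (k + 1)) ℝ) with hP
  have hPu : IsUnit P := by
    rw [← vecMul_injective_iff_isUnit]
    have : Function.Injective P.vecMulLinear := by
      rw [← LinearMap.ker_eq_bot, LinearMap.ker_eq_bot']
      intro g hg
      have hg : g ᵥ* P = 0 := hg
      have h1 : (g ᵥ* P) ⬝ᵥ g = (g ᵥ* X) ⬝ᵥ g + t * (g ⬝ᵥ g) := by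
        rw [hP, vecMul_add, vecMul_smul, vecMul_one, add_dotProduct, smul_dotProduct, smul_eq_mul]
      rw [hg, zero_dotProduct] at h1
      have h2 := X_acc g
      have h3 : 0 ≤ g ⬝ᵥ g := Finset.sum_nonneg fun i _ => mul_self_nonneg _
      have h4 : g ⬝ᵥ g = 0 := by nlinarith
      exact dotProduct_self_eq_zero.1 h4
    exact this
  have hdet : IsUnit P.det := (isUnit_iff_isUnit_det P).1 hPu
  refine ⟨P⁻¹ * (X - t • 1), Submodule.span ℝ {Pi.single 0 1 ᵥ* P⁻¹}, (finrank_span_le_card _).trans (by simp),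
    ?_, ?_⟩
  · intro z
    rw [← vecMul_vecMul]
    set g := z ᵥ* P⁻¹ with hg
    have hz : z = g ᵥ* P := by rw [hg, vecMul_vecMul, nonsing_inv_mul _ hdet, vecMul_one]
    rw [hz, hP, vecMul_add, vecMul_sub, vecMul_smul, vecMul_one]
    have h2 := X_acc g
    rw [← hX] at h2
    simp only [sub_dotProduct, dotProduct_sub, add_dotProduct, dotProduct_add, smul_dotProduct,
      dotProduct_smul, smul_eq_mul, dotProduct_comm g (g ᵥ* X)]
    nlinarith
  · intro x hx hx1
    have hd : 0 < 1 - x + t * x := by nlinarith [mul_nonneg ht.le hx]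
    refine Submodule.mem_span_singleton.2 ⟨2 * t / (1 - x + t * x), ?_⟩
    rw [← pv_Ysh x]
    have e1 : P⁻¹ * (X - t • 1) = (X - t • 1) * P⁻¹ := by
      have hc : P * (X - t • 1) = (X - t • 1) * P := by
        rw [hP]; simp [add_mul, mul_sub, mul_add, sub_mul, smul_sub]; abel
      calc P⁻¹ * (X - t • 1) = P⁻¹ * ((X - t • 1) * P) * P⁻¹ := by
            rw [Matrix.mul_assoc, Matrix.mul_assoc, mul_nonsing_inv _ hdet, Matrix.mul_one]
        _ = _ := by rw [← hc, ← Matrix.mul_assoc, nonsing_inv_mul _ hdet, Matrix.one_mul]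
    rw [e1, ← vecMul_vecMul]
    have e2 : pv (k + 1) x = (pv (k + 1) x ᵥ* P) ᵥ* P⁻¹ := by
      rw [vecMul_vecMul, mul_nonsing_inv _ hdet, vecMul_one]
    have e3 : ∀ c : ℝ, pv (k + 1) x - c • ((pv (k + 1) x ᵥ* (X - t • 1)) ᵥ* P⁻¹) =
        (pv (k + 1) x ᵥ* P - c • (pv (k + 1) x ᵥ* (X - t • 1))) ᵥ* P⁻¹ := by
      intro c
      rw [sub_vecMul, ← e2, smul_vecMul]
    rw [e3, ← smul_vecMul]
    congr 1
    rw [hP, hX]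
    ext i
    simp only [vecMul_add, vecMul_sub, vecMul_smul, vecMul_one, Pi.smul_apply, Pi.sub_apply,
      Pi.add_apply, smul_eq_mul]
    field_simp
    ring

/-- the key approximation -/
theorem key (n : ℕ) (hn : 2 ≤ n) (m : ℕ) :
    ∃ (N : Matrix (Fin n) (Fin n) ℝ) (W : Submodule ℝ (Fin n → ℝ)),
      Module.finrank ℝ W ≤ m * (Nat.log 2 n + 2) ∧
      (∀ z, (z ᵥ* N) ⬝ᵥ (z ᵥ* N) ≤ z ⬝ᵥ z) ∧
      ∀ x, 0 ≤ x → x ≤ 1 - 1 / (n : ℝ) →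
        ∃ r : ℝ, |r| ≤ (1 / 2) ^ m ∧ pv n x - r • (pv n x ᵥ* N) ∈ W := by
  obtain ⟨k, rfl⟩ : ∃ k, n = k + 1 := ⟨n - 1, by omega⟩
  obtain ⟨N, W, h1, h2, h3⟩ := good_pow (good_mul (good_Y k)
    (good_prod (fun i : ℕ => good_tau k ((1 / 2) ^ i) (by positivity)) (Nat.log 2 (k + 1) + 1))) m
  refine ⟨N, W, h1.trans (by apply le_of_eq; ring), h2, fun x hx hx1 => ?_⟩
  have hnp : (0 : ℝ) < ((k + 1 : ℕ) : ℝ) := by positivity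
  have hx2 : x < 1 := by
    have : 0 < 1 / ((k + 1 : ℕ) : ℝ) := by positivity
    linarith
  refine ⟨_, ?_, h3 x hx hx2⟩
  rw [abs_pow]
  refine pow_le_pow_left₀ (abs_nonneg _) ?_ m
  rw [abs_mul, Finset.abs_prod]
  set F : ℕ → ℝ := fun i => |(1 - x - (1 / 2) ^ i * x) / (1 - x + (1 / 2) ^ i * x)| with hF
  have hF0 : ∀ i, 0 ≤ F i := fun i => abs_nonneg _
  have hF1 : ∀ i, F i ≤ 1 := by
    intro i
    have hb : 0 ≤ ((1 : ℝ) / 2) ^ i * x := by positivity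
    have hd : 0 < 1 - x + (1 / 2) ^ i * x := by linarith
    rw [hF]
    simp only
    rw [abs_div, abs_of_pos hd, div_le_one hd, abs_le]
    constructor <;> linarith
  by_cases hxh : x ≤ 1 / 2
  · have : ∏ i ∈ Finset.range (Nat.log 2 (k + 1) + 1), F i ≤ 1 :=
      Finset.prod_le_one (fun i _ => hF0 i) (fun i _ => hF1 i)
    rw [abs_of_nonneg hx]
    have h0 : 0 ≤ ∏ i ∈ Finset.range (Nat.log 2 (k + 1) + 1), F i :=
      Finset.prod_nonneg (fun i _ => hF0 i)
    calc _ ≤ (1/2 : ℝ) * 1 := mul_le_mul hxh this h0 (by norm_num)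
      _ = _ := by norm_num
  · push Not at hxh
    -- find j
    have hex : ∃ j : ℕ, (1 / 2 : ℝ) ^ (j + 1) * x ≤ 1 - x := by
      refine ⟨Nat.log 2 (k + 1), ?_⟩
      have a1 : ((k + 1 : ℕ) : ℝ) ≤ 2 ^ (Nat.log 2 (k + 1) + 1) := by
        exact_mod_cast (Nat.lt_pow_succ_log_self (by norm_num) (k + 1)).le
      have a2 : (1 / 2 : ℝ) ^ (Nat.log 2 (k + 1) + 1) ≤ 1 / ((k + 1 : ℕ) : ℝ) := by
        rw [_root_.one_div_pow]
        exact one_div_le_one_div_of_le hnp a1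
      have a3 : (0 : ℝ) < (1 / 2 : ℝ) ^ (Nat.log 2 (k + 1) + 1) := by positivity
      nlinarith
    classical
    have hj := Nat.find_spec hex
    have hjle : Nat.find hex ≤ Nat.log 2 (k + 1) := by
      apply Nat.find_min'
      have a1 : ((k + 1 : ℕ) : ℝ) ≤ 2 ^ (Nat.log 2 (k + 1) + 1) := by
        exact_mod_cast (Nat.lt_pow_succ_log_self (by norm_num) (k + 1)).le
      have a2 : (1 / 2 : ℝ) ^ (Nat.log 2 (k + 1) + 1) ≤ 1 / ((k + 1 : ℕ) : ℝ) := by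
        rw [_root_.one_div_pow]
        exact one_div_le_one_div_of_le hnp a1
      have a3 : (0 : ℝ) < (1 / 2 : ℝ) ^ (Nat.log 2 (k + 1) + 1) := by positivity
      nlinarith
    have hup : 1 - x ≤ (1 / 2 : ℝ) ^ (Nat.find hex) * x := by
      rcases h : Nat.find hex with _ | j
      · simp; linarith
      · have := Nat.find_min hex (m := j) (by omega)
        push Not at this
        exact this.le
    set j := Nat.find hex
    have hFj : F j ≤ 1 / 2 := by
      have hb : 0 ≤ ((1 : ℝ) / 2) ^ j * x := by positivity
      have hd : 0 < 1 - x + (1 / 2) ^ j * x := by linarith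
      rw [hF]
      simp only
      rw [pow_succ] at hj
      rw [abs_div, abs_of_pos hd, div_le_iff₀ hd, abs_le]
      constructor <;> linarith
    have hp : ∏ i ∈ Finset.range (Nat.log 2 (k + 1) + 1), F i ≤ 1 / 2 := by
      rw [← Finset.mul_prod_erase _ _ (Finset.mem_range.2 (show j < Nat.log 2 (k + 1) + 1 by omega))]
      have : ∏ i ∈ (Finset.range (Nat.log 2 (k + 1) + 1)).erase j, F i ≤ 1 :=
        Finset.prod_le_one (fun i _ => hF0 i) (fun i _ => hF1 i)
      have h0 : 0 ≤ ∏ i ∈ (Finset.range (Nat.log 2 (k + 1) + 1)).erase j, F i :=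
        Finset.prod_nonneg (fun i _ => hF0 i)
      calc _ ≤ (1/2 : ℝ) * 1 := mul_le_mul hFj this h0 (by norm_num)
        _ = _ := by norm_num
    have h0 : 0 ≤ ∏ i ∈ Finset.range (Nat.log 2 (k + 1) + 1), F i :=
      Finset.prod_nonneg (fun i _ => hF0 i)
    rw [abs_of_nonneg hx]
    calc _ ≤ (1 : ℝ) * (1 / 2) := mul_le_mul hx2.le hp h0 (by norm_num)
      _ = _ := by norm_num

def App (n : ℕ) (S : Set ℝ) (K : ℕ) (δ M : ℝ) : Prop :=
  ∃ (N : Matrix (Fin n) (Fin n) ℝ) (W : Submodule ℝ (Fin n → ℝ)),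
    Module.finrank ℝ W ≤ K ∧ (∀ z, (z ᵥ* N) ⬝ᵥ (z ᵥ* N) ≤ M * (z ⬝ᵥ z)) ∧
    ∀ x ∈ S, ∃ r : ℝ, |r| ≤ δ ∧ pv n x - r • (pv n x ᵥ* N) ∈ W

theorem app_trans {n : ℕ} {S S' : Set ℝ} {K : ℕ} {δ M : ℝ} (a : ℝ) (ha : 0 ≤ a) (hM : 0 ≤ M)
    (T T' : Matrix (Fin n) (Fin n) ℝ) (hTT : T * T' = 1)
    (hT : ∀ z, (z ᵥ* T) ⬝ᵥ (z ᵥ* T) ≤ a * (z ⬝ᵥ z))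
    (hT' : ∀ z, (z ᵥ* T') ⬝ᵥ (z ᵥ* T') ≤ z ⬝ᵥ z)
    (hS : ∀ x' ∈ S', ∃ s : ℝ, ∃ x ∈ S, pv n x' = s • (pv n x ᵥ* T))
    (h : App n S K δ M) : App n S' K δ (a * M) := by
  obtain ⟨N, W, h1, h2, h3⟩ := h
  refine ⟨T' * (N * T), W.map T.vecMulLinear, (Submodule.finrank_map_le _ _).trans h1, ?_, ?_⟩
  · intro z
    rw [← vecMul_vecMul, ← vecMul_vecMul]
    refine (hT _).trans ?_
    rw [mul_assoc]
    refine mul_le_mul_of_nonneg_left ((h2 _).trans ?_) ha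
    exact mul_le_mul_of_nonneg_left (hT' _) hM
  · intro x' hx'
    obtain ⟨s, x, hx, e⟩ := hS x' hx'
    obtain ⟨r, hr, hm⟩ := h3 x hx
    refine ⟨r, hr, ?_⟩
    have : pv n x' - r • (pv n x' ᵥ* (T' * (N * T))) =
        s • ((pv n x - r • (pv n x ᵥ* N)) ᵥ* T) := by
      rw [e, smul_vecMul, vecMul_vecMul, ← Matrix.mul_assoc, hTT, Matrix.one_mul, sub_vecMul,
        smul_vecMul, vecMul_vecMul]
      ext i
      simp
      ring
    rw [this]
    exact Submodule.smul_mem _ _ (Submodule.mem_map_of_mem (f := T.vecMulLinear) hm)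

theorem diag_bound {n : ℕ} (d : Fin n → ℝ) (a : ℝ) (h : ∀ j, d j ^ 2 ≤ a) (z : Fin n → ℝ) :
    (z ᵥ* diagonal d) ⬝ᵥ (z ᵥ* diagonal d) ≤ a * (z ⬝ᵥ z) := by
  simp only [dotProduct, vecMul_diagonal, Finset.mul_sum]
  refine Finset.sum_le_sum fun i _ => ?_
  nlinarith [mul_le_mul_of_nonneg_right (h i) (mul_self_nonneg (z i))]

theorem app1 (n : ℕ) (hn : 2 ≤ n) (m : ℕ) :
    App n {x | 0 ≤ x ∧ x ≤ 1} (m * (Nat.log 2 n + 2)) ((1 / 2) ^ m) 16 := by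
  have h0 : App n {x | 0 ≤ x ∧ x ≤ 1 - 1 / (n : ℝ)} (m * (Nat.log 2 n + 2)) ((1 / 2) ^ m) 1 := by
    obtain ⟨N, W, h1, h2, h3⟩ := key n hn m
    exact ⟨N, W, h1, by simpa using h2, fun x hx => h3 x hx.1 hx.2⟩
  have hn' : (2 : ℝ) ≤ n := by exact_mod_cast hn
  set ρ : ℝ := 1 - 1 / (n : ℝ) with hρ
  have hρ0 : 0 < ρ := by
    rw [hρ, sub_pos, div_lt_one] <;> linarith
  have hρ1 : ρ ≤ 1 := by
    have : 0 ≤ 1 / (n : ℝ) := by positivity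
    linarith
  have hρi : ρ⁻¹ ≤ Real.exp (1 / ((n : ℝ) - 1)) := by
    have : ρ⁻¹ = 1 / ((n : ℝ) - 1) + 1 := by
      rw [hρ]
      have : (n : ℝ) - 1 ≠ 0 := by linarith
      field_simp
      ring
    rw [this]
    exact Real.add_one_le_exp _
  have := app_trans (S' := {x | 0 ≤ x ∧ x ≤ 1}) 16 (by norm_num) (by norm_num)
    (diagonal fun j : Fin n => (ρ⁻¹) ^ (j : ℕ)) (diagonal fun j : Fin n => ρ ^ (j : ℕ))
    ?_ ?_ ?_ ?_ h0
  · simpa using this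
  · rw [diagonal_mul_diagonal, ← diagonal_one]
    congr 1
    ext j
    rw [← mul_pow, inv_mul_cancel₀ hρ0.ne', one_pow]
  · apply diag_bound
    intro j
    have h1 : (ρ⁻¹) ^ (j : ℕ) ≤ 4 := by
      calc (ρ⁻¹) ^ (j : ℕ) ≤ (Real.exp (1 / ((n : ℝ) - 1))) ^ (j : ℕ) :=
            pow_le_pow_left₀ (by positivity) hρi _
        _ = Real.exp (j * (1 / ((n : ℝ) - 1))) := by rw [Real.exp_nat_mul]
        _ ≤ Real.exp 1 := by
          rw [Real.exp_le_exp, mul_one_div, div_le_one (by linarith)]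
          have : (j : ℕ) + 1 ≤ n := j.2
          have : ((j : ℕ) : ℝ) + 1 ≤ n := by exact_mod_cast this
          linarith
        _ ≤ 4 := by linarith [Real.exp_one_lt_d9]
    have h0 : 0 ≤ (ρ⁻¹) ^ (j : ℕ) := by positivity
    nlinarith
  · intro z
    have := diag_bound (fun j : Fin n => ρ ^ (j : ℕ)) 1 (fun j => ?_) z
    · simpa using this
    · exact pow_le_one₀ (by positivity) (pow_le_one₀ hρ0.le hρ1)
  · rintro x ⟨hx0, hx1⟩
    refine ⟨1, ρ * x, ⟨by positivity, by nlinarith⟩, ?_⟩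
    ext j
    simp only [pv, one_smul, vecMul_diagonal]
    rw [← mul_pow]
    congr 1
    field_simp

theorem app_neg {n : ℕ} {S : Set ℝ} {K : ℕ} {δ : ℝ} (h : App n S K δ 16) :
    App n {x | -x ∈ S} K δ 16 := by
  have hb : ∀ z, (z ᵥ* (diagonal fun j : Fin n => (-1 : ℝ) ^ (j : ℕ))) ⬝ᵥ
      (z ᵥ* (diagonal fun j : Fin n => (-1 : ℝ) ^ (j : ℕ))) ≤ 1 * (z ⬝ᵥ z) :=
    diag_bound _ _ fun j => by rw [← pow_mul, mul_comm, pow_mul]; simp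
  have := app_trans (S' := {x | -x ∈ S}) 1 (by norm_num) (by norm_num)
    (diagonal fun j : Fin n => (-1 : ℝ) ^ (j : ℕ)) (diagonal fun j : Fin n => (-1 : ℝ) ^ (j : ℕ))
    ?_ hb (by simpa using hb) ?_ h
  · simpa using this
  · rw [diagonal_mul_diagonal, ← diagonal_one]
    congr 1
    ext j
    rw [← mul_pow]; simp
  · intro x hx
    refine ⟨1, -x, hx, ?_⟩
    ext j
    simp only [pv, one_smul, vecMul_diagonal]
    rw [← mul_pow]; simp

theorem app_inv {n : ℕ} {S : Set ℝ} {K : ℕ} {δ : ℝ} (h : App n S K δ 16) :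
    App n {x | x ≠ 0 ∧ x⁻¹ ∈ S} K δ 16 := by
  set T : Matrix (Fin n) (Fin n) ℝ := Matrix.of fun i j => if i = Fin.rev j then 1 else 0 with hT
  have hTv : ∀ z j, (z ᵥ* T) j = z (Fin.rev j) := by
    intro z j
    simp [vecMul, dotProduct, hT]
  have hb : ∀ z, (z ᵥ* T) ⬝ᵥ (z ᵥ* T) ≤ z ⬝ᵥ z := by
    intro z
    simp only [dotProduct, hTv]
    exact (Equiv.sum_comp Fin.revPerm (fun i => z i * z i)).le
  have := app_trans (S' := {x | x ≠ 0 ∧ x⁻¹ ∈ S}) 1 (by norm_num) (by norm_num)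
    T T ?_ (by simpa using hb) hb ?_ h
  · simpa using this
  · ext i j
    have := hTv (T i) j
    rw [Matrix.mul_apply_eq_vecMul, this]
    simp [hT, one_apply]
  · rintro x ⟨hx0, hx⟩
    refine ⟨x ^ (n - 1), x⁻¹, hx, ?_⟩
    ext j
    simp only [pv, Pi.smul_apply, hTv, smul_eq_mul, Fin.val_rev]
    have e : n - 1 = (j : ℕ) + (n - (j + 1)) := by omega
    conv_rhs => rw [e]
    rw [pow_add, mul_assoc, ← mul_pow, mul_inv_cancel₀ hx0]; simp

theorem app_all (n : ℕ) (hn : 2 ≤ n) (m : ℕ) :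
    ∃ (N : Fin 4 → Matrix (Fin n) (Fin n) ℝ) (W : Submodule ℝ (Fin n → ℝ)),
      Module.finrank ℝ W ≤ 4 * (m * (Nat.log 2 n + 2)) ∧
      (∀ c z, (z ᵥ* N c) ⬝ᵥ (z ᵥ* N c) ≤ 16 * (z ⬝ᵥ z)) ∧
      ∀ x, ∃ c, ∃ r : ℝ, |r| ≤ (1 / 2) ^ m ∧ pv n x - r • (pv n x ᵥ* N c) ∈ W := by
  have H1 := app1 n hn m
  have H2 := app_neg H1
  have H3 := app_inv H1
  have H4 := app_inv H2
  obtain ⟨N1, W1, a1, b1, c1⟩ := H1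
  obtain ⟨N2, W2, a2, b2, c2⟩ := H2
  obtain ⟨N3, W3, a3, b3, c3⟩ := H3
  obtain ⟨N4, W4, a4, b4, c4⟩ := H4
  refine ⟨![N1, N2, N3, N4], (W1 ⊔ W2) ⊔ (W3 ⊔ W4), ?_, ?_, ?_⟩
  · have d1 := Submodule.finrank_add_le_finrank_add_finrank (W1 ⊔ W2) (W3 ⊔ W4)
    have d2 := Submodule.finrank_add_le_finrank_add_finrank W1 W2
    have d3 := Submodule.finrank_add_le_finrank_add_finrank W3 W4
    omega
  · intro c
    fin_cases c
    exacts [b1, b2, b3, b4]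
  · intro x
    by_cases hx1 : |x| ≤ 1
    · rw [abs_le] at hx1
      rcases le_total 0 x with h | h
      · obtain ⟨r, hr, hm⟩ := c1 x ⟨h, hx1.2⟩
        exact ⟨0, r, hr, (le_sup_left.trans le_sup_left : W1 ≤ (W1 ⊔ W2) ⊔ (W3 ⊔ W4)) hm⟩
      · obtain ⟨r, hr, hm⟩ := c2 x ⟨by linarith, by linarith⟩
        exact ⟨1, r, hr, (le_sup_right.trans le_sup_left : W2 ≤ (W1 ⊔ W2) ⊔ (W3 ⊔ W4)) hm⟩
    · push Not at hx1
      have hx0 : x ≠ 0 := by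
        rintro rfl
        norm_num at hx1
      have hi : |x⁻¹| ≤ 1 := by rw [abs_inv]; exact inv_le_one_of_one_le₀ hx1.le
      rw [abs_le] at hi
      rcases le_total 0 x⁻¹ with h | h
      · obtain ⟨r, hr, hm⟩ := c3 x ⟨hx0, h, hi.2⟩
        exact ⟨2, r, hr, (le_sup_left.trans le_sup_right : W3 ≤ (W1 ⊔ W2) ⊔ (W3 ⊔ W4)) hm⟩
      · obtain ⟨r, hr, hm⟩ := c4 x ⟨hx0, by simpa using h, by linarith⟩
        exact ⟨3, r, hr, (le_sup_right.trans le_sup_right : W4 ≤ (W1 ⊔ W2) ⊔ (W3 ⊔ W4)) hm⟩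

theorem fro_quad {n : ℕ} (a : Fin n → ℝ) (v : Fin n → Fin n → ℝ) :
    ∑ i, ∑ j, (∑ l, a l * v l i * v l j) ^ 2 =
      ∑ l, ∑ l', a l * a l' * (v l ⬝ᵥ v l') ^ 2 := by
  have e : ∀ i j, (∑ l, a l * v l i * v l j) ^ 2 =
      ∑ l, ∑ l', a l * a l' * ((v l i * v l' i) * (v l j * v l' j)) := by
    intro i j
    rw [sq, Finset.sum_mul_sum]
    exact Finset.sum_congr rfl fun l _ => Finset.sum_congr rfl fun l' _ => by ring
  simp only [e]
  have e2 : ∀ l l', a l * a l' * (v l ⬝ᵥ v l') ^ 2 =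
      ∑ i, ∑ j, a l * a l' * ((v l i * v l' i) * (v l j * v l' j)) := by
    intro l l'
    rw [sq, dotProduct, Finset.sum_mul_sum, Finset.mul_sum]
    simp only [Finset.mul_sum]
  simp only [e2]
  simp only [← Fintype.sum_prod_type']
  exact Fintype.sum_equiv
    ⟨fun p => (p.2.2.1, p.2.2.2, p.1, p.2.1), fun p => (p.2.2.1, p.2.2.2, p.1, p.2.1),
      fun _ => rfl, fun _ => rfl⟩ _ _ (fun _ => rfl)

theorem fro_mono {n : ℕ} (a w : Fin n → ℝ) (v : Fin n → Fin n → ℝ) (δ : ℝ)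
    (h : ∀ l, |a l| ≤ δ * w l) :
    ∑ i, ∑ j, (∑ l, a l * v l i * v l j) ^ 2 ≤
      δ ^ 2 * ∑ i, ∑ j, (∑ l, w l * v l i * v l j) ^ 2 := by
  rw [fro_quad, fro_quad, Finset.mul_sum]
  refine Finset.sum_le_sum fun l _ => ?_
  rw [Finset.mul_sum]
  refine Finset.sum_le_sum fun l' _ => ?_
  have : a l * a l' ≤ (δ * w l) * (δ * w l') := by
    refine (le_abs_self _).trans ?_
    rw [abs_mul]
    exact mul_le_mul (h l) (h l') (abs_nonneg _) ((abs_nonneg _).trans (h l))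
  nlinarith [mul_le_mul_of_nonneg_right this (sq_nonneg (v l ⬝ᵥ v l'))]

theorem main_approx (n : ℕ) (hn : 2 ≤ n) (m : ℕ) (H : Matrix (Fin n) (Fin n) ℝ) (hp : H.PosDef)
    (hH : IsHankel H) :
    ∃ B : Matrix (Fin n) (Fin n) ℝ, B.rank ≤ 4 * (m * (Nat.log 2 n + 2)) ∧
      ∑ i, ∑ j, ((H - B) i j) ^ 2 ≤ (16 * (1 / 2) ^ m) ^ 2 * ∑ i, ∑ j, (H i j) ^ 2 := by
  obtain ⟨x, w, hw, hx⟩ := hankel_repr H hp hH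
  obtain ⟨N, W, h1, h2, h3⟩ := app_all n hn m
  choose c r hr hW using fun l => h3 (x l)
  have hHv : ∀ i j, H i j = ∑ l, w l * pv n (x l) i * pv n (x l) j := by
    intro i j
    rw [hx]
    refine Finset.sum_congr rfl fun l _ => ?_
    simp only [pv, pow_add]; ring
  set M : Fin 4 → Matrix (Fin n) (Fin n) ℝ := fun d => Matrix.of fun i j =>
    ∑ l, (if c l = d then w l * r l else 0) * pv n (x l) i * pv n (x l) j with hM
  set B : Matrix (Fin n) (Fin n) ℝ := Matrix.of fun i =>
    ∑ l, (w l * pv n (x l) i) • (pv n (x l) - r l • (pv n (x l) ᵥ* N (c l))) with hB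
  have hrow : ∀ d i, (M d * N d) i = M d i ᵥ* N d := fun d i => by
    rw [Matrix.mul_apply_eq_vecMul]
  have hMrow : ∀ d i, M d i = ∑ l, ((if c l = d then w l * r l else 0) * pv n (x l) i) •
      pv n (x l) := by
    intro d i
    ext j
    simp only [hM, of_apply, Finset.sum_apply, Pi.smul_apply, smul_eq_mul]
  have hdiff : ∀ i j, (H - B) i j = ∑ d, (M d i ᵥ* N d) j := by
    intro i j
    have e1 : ∀ d, (M d i ᵥ* N d) j = ∑ l, (if c l = d then w l * r l else 0) * pv n (x l) i *
        (pv n (x l) ᵥ* N d) j := by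
      intro d
      rw [hMrow, sum_vecMul, Finset.sum_apply]
      refine Finset.sum_congr rfl fun l _ => ?_
      rw [smul_vecMul]; simp
    simp only [e1]
    rw [Finset.sum_comm, Matrix.sub_apply, hHv, hB]
    simp only [of_apply, Finset.sum_apply]
    rw [← Finset.sum_sub_distrib]
    refine Finset.sum_congr rfl fun l _ => ?_
    rw [Finset.sum_eq_single (c l)]
    · simp; ring
    · intro d _ hd
      simp [hd.symm]
    · simp
  refine ⟨B, ?_, ?_⟩
  · rw [rank_eq_finrank_span_row]
    refine (Submodule.finrank_mono (Submodule.span_le.2 ?_)).trans h1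
    rintro _ ⟨i, rfl⟩
    change (∑ l, (w l * pv n (x l) i) • (pv n (x l) - r l • (pv n (x l) ᵥ* N (c l)))) ∈ W
    exact Submodule.sum_mem _ fun l _ => Submodule.smul_mem _ _ (hW l)
  · have hF : ∀ d, ∑ i, ∑ j, (M d i j) ^ 2 ≤ ((1 / 2) ^ m) ^ 2 * ∑ i, ∑ j, (H i j) ^ 2 := by
      intro d
      simp only [hHv]
      refine fro_mono _ w (fun l => pv n (x l)) _ fun l => ?_
      have hd : (0 : ℝ) ≤ (1 / 2) ^ m := by positivity
      split_ifs
      · rw [abs_mul, abs_of_nonneg (hw l), mul_comm]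
        exact mul_le_mul_of_nonneg_right (hr l) (hw l)
      · rw [abs_zero]; exact mul_nonneg hd (hw l)
    calc ∑ i, ∑ j, ((H - B) i j) ^ 2
        ≤ ∑ i, ∑ j, 4 * ∑ d, (M d i ᵥ* N d) j ^ 2 := by
          refine Finset.sum_le_sum fun i _ => Finset.sum_le_sum fun j _ => ?_
          rw [hdiff]
          have := sq_sum_le_card_mul_sum_sq (s := Finset.univ) (f := fun d => (M d i ᵥ* N d) j)
          simpa using this
      _ = 4 * ∑ d, ∑ i, (M d i ᵥ* N d) ⬝ᵥ (M d i ᵥ* N d) := by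
          simp only [← Finset.mul_sum]
          congr 1
          conv_rhs => rw [Finset.sum_comm]
          refine Finset.sum_congr rfl fun i _ => ?_
          rw [Finset.sum_comm]
          refine Finset.sum_congr rfl fun d _ => ?_
          simp only [dotProduct, sq]
      _ ≤ 4 * ∑ d, ∑ i, 16 * (M d i ⬝ᵥ M d i) := by
          gcongr with d _ i _
          exact h2 d _
      _ = 64 * ∑ d, ∑ i, ∑ j, M d i j ^ 2 := by
          simp only [← Finset.mul_sum, dotProduct, sq]
          ring
      _ ≤ 64 * ∑ d : Fin 4, ((1 / 2) ^ m) ^ 2 * ∑ i, ∑ j, (H i j) ^ 2 := by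
          gcongr with d _
          exact hF d
      _ = _ := by
          simp
          ring

theorem final_bound :
    ∃ C : ℝ, 0 < C ∧
      ∀ (n : ℕ), 2 ≤ n → ∀ ε : ℝ, 0 < ε → ε < 1 / 2 →
        ∀ H : Matrix (Fin n) (Fin n) ℝ, H.PosDef → IsHankel H →
          ∀ k : ℕ, C * Real.log n * Real.log (1 / ε) ≤ (k : ℝ) → k ≤ n →
            ∃ B : Matrix (Fin n) (Fin n) ℝ, B.rank ≤ k ∧
              froNorm (H - B) ≤ ε * froNorm H := by
  refine ⟨200, by norm_num, fun n hn ε hε hε2 H hp hH k hk _ => ?_⟩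
  have hl2 : 0.69 < Real.log 2 := by linarith [Real.log_two_gt_d9]
  have hn' : (2 : ℝ) ≤ n := by exact_mod_cast hn
  set L := Real.logb 2 (1 / ε) with hL
  have hL1 : 1 ≤ L := by
    rw [hL, Real.le_logb_iff_rpow_le (by norm_num) (by positivity), Real.rpow_one,
      le_div_iff₀ hε]
    linarith
  have hLl : L * Real.log 2 = Real.log (1 / ε) := by
    rw [hL, Real.logb]; field_simp
  set m := ⌈L⌉₊ + 4 with hm
  have hm1 : (m : ℝ) ≤ 6 * L := by
    have := Nat.ceil_lt_add_one (show 0 ≤ L by linarith)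
    rw [hm]; push_cast; linarith
  set Q := Real.logb 2 n with hQ
  have hQ1 : 1 ≤ Q := by
    rw [hQ, Real.le_logb_iff_rpow_le (by norm_num) (by positivity), Real.rpow_one]
    exact hn'
  have hQl : Q * Real.log 2 = Real.log n := by
    rw [hQ, Real.logb]; field_simp
  have hlog : ((Nat.log 2 n : ℕ) : ℝ) + 2 ≤ 3 * Q := by
    have : ((Nat.log 2 n : ℕ) : ℝ) ≤ Q := by
      rw [hQ]
      exact_mod_cast Real.natLog_le_logb n 2
    linarith
  have hme : 16 * (1 / 2 : ℝ) ^ m ≤ ε := by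
    have h1 : (1 / ε : ℝ) ≤ 2 ^ (⌈L⌉₊) := by
      rw [← Real.rpow_natCast, ← Real.logb_le_iff_le_rpow (by norm_num) (by positivity)]
      exact Nat.le_ceil L
    rw [hm, pow_add, _root_.one_div_pow]
    have h2 : (1 : ℝ) / 2 ^ (⌈L⌉₊) ≤ ε := by
      rw [div_le_iff₀ (by positivity)]
      rwa [div_le_iff₀ hε, mul_comm] at h1
    linarith
  obtain ⟨B, hB1, hB2⟩ := main_approx n hn m H hp hH
  refine ⟨B, hB1.trans ?_, ?_⟩
  · have : ((4 * (m * (Nat.log 2 n + 2)) : ℕ) : ℝ) ≤ k := by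
      refine le_trans ?_ hk
      push_cast
      rw [← hLl, ← hQl]
      have h1 : (m : ℝ) * ((Nat.log 2 n : ℕ) + 2) ≤ (6 * L) * (3 * Q) :=
        mul_le_mul hm1 hlog (by positivity) (by linarith)
      have h2 : 0.47 ≤ Real.log 2 * Real.log 2 := by nlinarith
      have h3 : 0 ≤ L * Q := by positivity
      nlinarith [mul_le_mul_of_nonneg_left h2 h3]
    exact_mod_cast this
  · unfold froNorm
    have h0 : 0 ≤ ∑ i, ∑ j, (H i j) ^ 2 :=
      Finset.sum_nonneg fun i _ => Finset.sum_nonneg fun j _ => sq_nonneg _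
    rw [← Real.sqrt_sq hε.le, ← Real.sqrt_mul (sq_nonneg _)]
    apply Real.sqrt_le_sqrt
    refine hB2.trans ?_
    gcongr

end helpers

/-- (Lemma: implication 1 of Corollary 5.5 of Beckermann–Townsend.)
Since the truncated eigendecomposition `H_k` minimizes the Frobenius norm error over all
matrices of rank at most `k` (Eckart–Young), the conclusion `‖H − H_k‖_F ≤ ε‖H‖_F` is
expressed equivalently as: there exists a matrix `B` of rank at most `k` with
`‖H − B‖_F ≤ ε‖H‖_F`. -/
theorem posdef_hankel_low_rank_frobenius :
    ∃ C : ℝ, 0 < C ∧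
      ∀ (n : ℕ), 2 ≤ n → ∀ ε : ℝ, 0 < ε → ε < 1 / 2 →
        ∀ H : Matrix (Fin n) (Fin n) ℝ, H.PosDef → IsHankel H →
          ∀ k : ℕ, C * Real.log n * Real.log (1 / ε) ≤ (k : ℝ) → k ≤ n →
            ∃ B : Matrix (Fin n) (Fin n) ℝ, B.rank ≤ k ∧
              froNorm (H - B) ≤ ε * froNorm H := by
  exact final_bound
end
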